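/- arXiv:1811.12698 — 14 statements merged into one kernel-verified Lean document; each statement's English description precedes it below -/
import Mathlib

section
/- Let X be a nonempty subset of a real Hilbert space H (with the induced metric d(x,y) = ‖x − y‖) and T a mapping of X into itself. Then T is firmly metrically nonspreading if and only if T is firmly nonexpansive, i.e., ‖Tx − Ty‖² ≤ ⟪Tx − Ty, x − y⟫ for all x,y ∈ X. -/
open scoped RealInnerProductSpace

/-- A self-mapping of a nonempty subset of a real Hilbert space is firmly metrically
nonspreading (for the induced metric) if and only if it is firmly nonexpansive. -/
theorem stmt_3 {H : Type*} [NormedAddCommGroup H] [InnerProductSpace ℝ H]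
    [CompleteSpace H] (X : Set H) (hX : X.Nonempty) (T : X → X) :
    (∀ x y : X, 2 * dist (T x) (T y) ^ 2 + dist (T x) x ^ 2 + dist (T y) y ^ 2
      ≤ dist (T x) y ^ 2 + dist (T y) x ^ 2)
    ↔ (∀ x y : X, ‖(T x : H) - (T y : H)‖ ^ 2 ≤ ⟪(T x : H) - (T y : H), (x : H) - (y : H)⟫) := by
  have key : ∀ a b x y : H, ‖a - y‖ ^ 2 + ‖b - x‖ ^ 2 - ‖a - x‖ ^ 2 - ‖b - y‖ ^ 2
      = 2 * ⟪a - b, x - y⟫ := by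
    intro a b x y
    simp only [norm_sub_sq_real, inner_sub_left, inner_sub_right]
    ring
  refine forall_congr' fun x => forall_congr' fun y => ?_
  have h := key (T x) (T y) x y
  simp only [Subtype.dist_eq, dist_eq_norm]
  constructor <;> intro h' <;> linarith
end

section
/- Let (X,d) be a metric space, a ∈ X, r > 0, and S, T metrically nonspreading mappings of X into itself such that d(Sx, a) ≤ r and d(Tx, a) ≤ r for all x ∈ X. Let δ be a positive real number with δ ≥ (1 + 2√2)·r, and let U be the mapping of X into itself defined by Ux = Sx if d(x,a) ≤ δ and Ux = Tx otherwise. Then U is metrically nonspreading. -/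
/-- Gluing two metrically nonspreading mappings whose ranges lie in a ball `B̄_r(a)`
along a ball `B̄_δ(a)` with `δ ≥ (1 + 2√2)·r` yields a metrically nonspreading mapping. -/
theorem stmt_4 {X : Type*} [MetricSpace X] (a : X) (r : ℝ) (hr : 0 < r)
    (S T : X → X)
    (hS : ∀ x y : X, 2 * dist (S x) (S y) ^ 2 ≤ dist (S x) y ^ 2 + dist (S y) x ^ 2)
    (hT : ∀ x y : X, 2 * dist (T x) (T y) ^ 2 ≤ dist (T x) y ^ 2 + dist (T y) x ^ 2)
    (hSr : ∀ x : X, dist (S x) a ≤ r) (hTr : ∀ x : X, dist (T x) a ≤ r)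
    (δ : ℝ) (hδ0 : 0 < δ) (hδ : (1 + 2 * Real.sqrt 2) * r ≤ δ)
    (U : X → X)
    (hU₁ : ∀ x : X, dist x a ≤ δ → U x = S x)
    (hU₂ : ∀ x : X, ¬ dist x a ≤ δ → U x = T x) :
    ∀ x y : X, 2 * dist (U x) (U y) ^ 2 ≤ dist (U x) y ^ 2 + dist (U y) x ^ 2 := by
  have key : ∀ p q y : X, dist p a ≤ r → dist q a ≤ r → ¬ dist y a ≤ δ →
      2 * dist p q ^ 2 ≤ dist p y ^ 2 := by
    intro p q y hp hq hy
    have h1 : dist p q ≤ 2 * r := by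
      have := dist_triangle_right p q a
      linarith
    have h2 : 2 * Real.sqrt 2 * r ≤ dist p y := by
      have := dist_triangle_left y a p
      linarith
    have h3 : dist p q ^ 2 ≤ (2 * r) ^ 2 := pow_le_pow_left₀ dist_nonneg h1 2
    have h4 : (2 * Real.sqrt 2 * r) ^ 2 ≤ dist p y ^ 2 :=
      pow_le_pow_left₀ (by positivity) h2 2
    have h5 : (2 * Real.sqrt 2 * r) ^ 2 = 8 * r ^ 2 := by
      rw [mul_pow, mul_pow, Real.sq_sqrt (by norm_num)]
      ring
    nlinarith
  intro x y
  by_cases hx : dist x a ≤ δ <;> by_cases hy : dist y a ≤ δ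
  · rw [hU₁ x hx, hU₁ y hy]
    exact hS x y
  · rw [hU₁ x hx, hU₂ y hy]
    have := key _ _ y (hSr x) (hTr y) hy
    have := sq_nonneg (dist (T y) x)
    linarith
  · rw [hU₂ x hx, hU₁ y hy]
    have := key _ _ x (hSr y) (hTr x) hx
    rw [dist_comm (S y) (T x)] at this
    have := sq_nonneg (dist (T x) y)
    linarith
  · rw [hU₂ x hx, hU₂ y hy]
    exact hT x y
end

section
/- Let (X,d) be a metric space, T a metrically nonspreading mapping of X into itself, and {x_n} a sequence in X such that the asymptotic center AC({x_n}) equals the singleton {p} for some p ∈ X. If limsup_n d(x_n, p) = limsup_n d(Tx_n, p) and limsup_n d(x_n, Tp) = limsup_n d(Tx_n, Tp), then Tp = p. -/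
open Filter

/-- Junk value: the real limsup of a sequence that is not bounded above is zero. -/
lemma limsup_junk (f : ℕ → ℝ) (h : ¬ IsBoundedUnder (· ≤ ·) atTop f) :
    limsup f atTop = 0 := by
  have h0 : {a : ℝ | ∀ᶠ n in atTop, f n ≤ a} = ∅ := by
    ext a
    simp only [Set.mem_ofPred_eq, Set.mem_empty_iff_false, iff_false]
    intro ha
    exact h ⟨a, by simpa using ha⟩
  rw [limsup_eq, h0, Real.sInf_empty]

lemma bdd_of_bdd {X : Type*} [MetricSpace X] (x : ℕ → X) (p u : X)
    (h : IsBoundedUnder (· ≤ ·) atTop (fun n => dist (x n) p)) :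
    IsBoundedUnder (· ≤ ·) atTop (fun n => dist (x n) u) := by
  obtain ⟨M, hM⟩ := h
  refine ⟨M + dist p u, ?_⟩
  simp only [eventually_map] at hM ⊢
  filter_upwards [hM] with n hn
  linarith [dist_triangle (x n) p u]

lemma cobdd {X : Type*} [MetricSpace X] (x : ℕ → X) (u : X) :
    IsCoboundedUnder (· ≤ ·) atTop (fun n => dist (x n) u) :=
  IsBoundedUnder.isCoboundedUnder_le
    ⟨0, by simp only [eventually_map]; exact Eventually.of_forall fun n => dist_nonneg⟩

lemma limsup_dist_nonneg {X : Type*} [MetricSpace X] (x : ℕ → X) (u : X) :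
    0 ≤ limsup (fun n => dist (x n) u) atTop := by
  by_cases h : IsBoundedUnder (· ≤ ·) atTop (fun n => dist (x n) u)
  · exact le_limsup_of_frequently_le (Frequently.of_forall fun n => dist_nonneg) h
  · rw [limsup_junk _ h]

/-- If `T` is metrically nonspreading, the asymptotic center of `{xₙ}` is `{p}`,
`limsupₙ d(xₙ,p) = limsupₙ d(Txₙ,p)` and `limsupₙ d(xₙ,Tp) = limsupₙ d(Txₙ,Tp)`,
then `p` is a fixed point of `T`. -/
theorem stmt_5 {X : Type*} [MetricSpace X] (T : X → X)
    (hT : ∀ x y : X, 2 * dist (T x) (T y) ^ 2 ≤ dist (T x) y ^ 2 + dist (T y) x ^ 2)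
    (x : ℕ → X) (p : X)
    (hAC : {u : X | limsup (fun n => dist u (x n)) atTop
              = ⨅ y : X, limsup (fun n => dist y (x n)) atTop} = {p})
    (h₁ : limsup (fun n => dist (x n) p) atTop = limsup (fun n => dist (T (x n)) p) atTop)
    (h₂ : limsup (fun n => dist (x n) (T p)) atTop
        = limsup (fun n => dist (T (x n)) (T p)) atTop) :
    T p = p := by
  have hp : p ∈ {u : X | limsup (fun n => dist u (x n)) atTop
              = ⨅ y : X, limsup (fun n => dist y (x n)) atTop} := by
    rw [hAC]; rfl
  suffices hs : T p ∈ {u : X | limsup (fun n => dist u (x n)) atTop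
              = ⨅ y : X, limsup (fun n => dist y (x n)) atTop} by
    rw [hAC] at hs; exact hs
  simp only [Set.mem_ofPred_eq, dist_comm _ (x _)] at hp ⊢
  suffices hle : limsup (fun n => dist (x n) (T p)) atTop
      ≤ limsup (fun n => dist (x n) p) atTop by
    apply le_antisymm
    · rw [← hp]; exact hle
    · refine ciInf_le ⟨0, ?_⟩ (T p)
      rintro _ ⟨y, rfl⟩
      exact limsup_dist_nonneg x y
  by_cases hb : IsBoundedUnder (· ≤ ·) atTop (fun n => dist (x n) p)
  swap
  · rw [limsup_junk _ hb, limsup_junk]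
    exact fun h => hb (bdd_of_bdd x (T p) p h)
  have hb' := bdd_of_bdd x p (T p) hb
  by_cases hc : IsBoundedUnder (· ≤ ·) atTop (fun n => dist (T (x n)) p)
  swap
  · have hc' : ¬ IsBoundedUnder (· ≤ ·) atTop (fun n => dist (T (x n)) (T p)) :=
      fun h => hc (bdd_of_bdd (fun n => T (x n)) (T p) p h)
    rw [h₁, h₂, limsup_junk _ hc, limsup_junk _ hc']
  set a := limsup (fun n => dist (x n) p) atTop with ha
  set b := limsup (fun n => dist (x n) (T p)) atTop with hbdef
  have ha0 : 0 ≤ a := limsup_dist_nonneg x p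
  have hb0 : 0 ≤ b := limsup_dist_nonneg x (T p)
  have key : ∀ ε : ℝ, 0 < ε → 2 * b ^ 2 ≤ (a + ε) ^ 2 + (b + ε) ^ 2 := by
    intro ε hε
    have e1 : ∀ᶠ n in atTop, dist (T (x n)) p < a + ε :=
      eventually_lt_of_limsup_lt (by rw [← h₁]; linarith) hc
    have e2 : ∀ᶠ n in atTop, dist (x n) (T p) < b + ε :=
      eventually_lt_of_limsup_lt (by rw [← hbdef]; linarith) hb'
    have e3 : b ≤ √(((a + ε) ^ 2 + (b + ε) ^ 2) / 2) := by
      refine h₂.le.trans ?_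
      refine limsup_le_of_le (cobdd (fun n => T (x n)) (T p)) ?_
      filter_upwards [e1, e2] with n h1 h2
      apply Real.le_sqrt_of_sq_le
      have h3 := hT (x n) p
      rw [dist_comm (T p) (x n)] at h3
      have h4 := pow_le_pow_left₀ dist_nonneg h1.le 2
      have h5 := pow_le_pow_left₀ dist_nonneg h2.le 2
      linarith
    have h6 := (Real.le_sqrt hb0 (by positivity)).1 e3
    linarith
  have lim : 2 * b ^ 2 ≤ a ^ 2 + b ^ 2 := by
    have ht : Tendsto (fun ε : ℝ => (a + ε) ^ 2 + (b + ε) ^ 2) (nhdsWithin 0 (Set.Ioi 0))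
        (nhds ((a + 0) ^ 2 + (b + 0) ^ 2)) :=
      (Continuous.tendsto (by fun_prop) 0).mono_left nhdsWithin_le_nhds
    simp only [add_zero] at ht
    exact ge_of_tendsto ht (by filter_upwards [self_mem_nhdsWithin] with ε hε using key ε hε)
  exact abs_le_of_sq_le_sq' (by linarith) ha0 |>.2
end

section
/- Let C be a nonempty closed convex subset of a real Hilbert space H and T a metrically nonspreading mapping of C into itself (with the metric induced by the norm). Then T has a fixed point if and only if the orbit {Tⁿx : n ∈ ℕ} is bounded for some x ∈ C. -/
/-- Asymptotic centre of a bounded sequence in a closed convex set. -/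
theorem asymp_center {H : Type*} [NormedAddCommGroup H] [InnerProductSpace ℝ H]
    [CompleteSpace H] (C : Set H) (hCc : IsClosed C) (hCv : Convex ℝ C)
    (x : ℕ → H) (z : H) (hz : z ∈ C) (R : ℝ) (hR : ∀ n, ‖x n - z‖ ≤ R) :
    ∃ m : ℝ, 0 ≤ m ∧
      (∀ y ∈ C, ∀ w ∈ C, ∀ c : ℝ, (∀ᶠ n in Filter.atTop, ‖x n - y‖ ≤ c) →
        (∀ᶠ n in Filter.atTop, ‖x n - w‖ ≤ c) → ‖y - w‖ ^ 2 ≤ 4 * (c ^ 2 - m ^ 2)) ∧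
      ∃ u ∈ C, ∀ c : ℝ, m < c → ∀ᶠ n in Filter.atTop, ‖x n - u‖ ≤ c := by
  set S : Set ℝ := {c | ∃ y ∈ C, ∀ᶠ n in Filter.atTop, ‖x n - y‖ ≤ c} with hS
  have hSne : S.Nonempty := ⟨R, z, hz, Filter.Eventually.of_forall hR⟩
  have hS0 : ∀ c ∈ S, 0 ≤ c := by
    rintro c ⟨y, -, h⟩
    obtain ⟨n, hn⟩ := h.exists
    exact (norm_nonneg _).trans hn
  have hSb : BddBelow S := ⟨0, hS0⟩
  have hm0 : 0 ≤ sInf S := le_csInf hSne hS0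
  set m := sInf S with hm
  have key : ∀ y ∈ C, ∀ w ∈ C, ∀ c : ℝ, (∀ᶠ n in Filter.atTop, ‖x n - y‖ ≤ c) →
        (∀ᶠ n in Filter.atTop, ‖x n - w‖ ≤ c) → ‖y - w‖ ^ 2 ≤ 4 * (c ^ 2 - m ^ 2) := by
    intro y hy w hw c h1 h2
    have hev : ∀ᶠ n in Filter.atTop,
        ‖x n - midpoint ℝ y w‖ ^ 2 ≤ c ^ 2 - ‖y - w‖ ^ 2 / 4 := by
      filter_upwards [h1, h2] with n a b
      have hp := parallelogram_law_with_norm ℝ (x n - y) (x n - w)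
      have e1 : (x n - y) + (x n - w) = (2 : ℝ) • (x n - midpoint ℝ y w) := by
        rw [midpoint_eq_smul_add, smul_sub, smul_smul]
        norm_num
        rw [two_smul]
        abel
      have e2 : (x n - y) - (x n - w) = w - y := by abel
      rw [e1, e2, norm_smul, norm_sub_rev w y] at hp
      norm_num at hp
      have a' := pow_le_pow_left₀ (norm_nonneg _) a 2
      have b' := pow_le_pow_left₀ (norm_nonneg _) b 2
      nlinarith
    have hmem : √(c ^ 2 - ‖y - w‖ ^ 2 / 4) ∈ S := by
      refine ⟨midpoint ℝ y w, hCv.midpoint_mem hy hw, ?_⟩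
      filter_upwards [hev] with n hn
      exact Real.le_sqrt_of_sq_le hn
    have hnn : 0 ≤ c ^ 2 - ‖y - w‖ ^ 2 / 4 := by
      obtain ⟨n, hn⟩ := hev.exists
      exact (sq_nonneg _).trans hn
    have h3 := pow_le_pow_left₀ hm0 (csInf_le hSb hmem) 2
    rw [Real.sq_sqrt hnn] at h3
    linarith
  refine ⟨m, hm0, key, ?_⟩
  have hex : ∀ c : ℝ, m < c → ∃ y ∈ C, ∀ᶠ n in Filter.atTop, ‖x n - y‖ ≤ c := by
    intro c hc
    obtain ⟨c', ⟨y, hy, h⟩, hlt⟩ := exists_lt_of_csInf_lt hSne hc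
    exact ⟨y, hy, h.mono fun n hn => hn.trans hlt.le⟩
  choose y hyC hy using fun k : ℕ => hex (m + 1 / ((k : ℝ) + 1))
    (lt_add_of_pos_right _ (by positivity))
  have ht : Filter.Tendsto (fun k : ℕ => m + 1 / ((k : ℝ) + 1)) Filter.atTop (nhds m) := by
    simpa using (tendsto_one_div_add_atTop_nhds_zero_nat (𝕜 := ℝ)).const_add m
  have hcs : CauchySeq y := by
    refine cauchySeq_of_le_tendsto_0'
      (fun k : ℕ => √(4 * ((m + 1 / ((k : ℝ) + 1)) ^ 2 - m ^ 2))) ?_ ?_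
    · intro k l hkl
      rw [dist_eq_norm]
      apply Real.le_sqrt_of_sq_le
      refine key _ (hyC k) _ (hyC l) _ (hy k) ((hy l).mono fun n hn => hn.trans ?_)
      have := Nat.one_div_le_one_div (α := ℝ) hkl
      linarith
    · have := (((ht.pow 2).sub_const (m ^ 2)).const_mul 4).sqrt
      simpa using this
  obtain ⟨u, hu⟩ := cauchySeq_tendsto_of_complete hcs
  refine ⟨u, hCc.mem_of_tendsto hu (Filter.Eventually.of_forall hyC), fun c hc => ?_⟩
  have h1 := ht.add (tendsto_iff_norm_sub_tendsto_zero.1 hu)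
  rw [add_zero] at h1
  obtain ⟨k, hk⟩ := (h1.eventually (gt_mem_nhds hc)).exists
  filter_upwards [hy k] with n hn
  have := norm_sub_le_norm_sub_add_norm_sub (x n) (y k) u
  linarith

/-- A metrically nonspreading self-mapping of a nonempty closed convex subset of a real
Hilbert space has a fixed point if and only if some orbit `{Tⁿx}` is bounded. -/
theorem stmt_6 {H : Type*} [NormedAddCommGroup H] [InnerProductSpace ℝ H]
    [CompleteSpace H] (C : Set H) (hC : C.Nonempty) (hCc : IsClosed C) (hCv : Convex ℝ C)
    (T : C → C)
    (hT : ∀ x y : C, 2 * dist (T x) (T y) ^ 2 ≤ dist (T x) y ^ 2 + dist (T y) x ^ 2) :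
    (∃ u : C, T u = u) ↔
      ∃ x : C, Bornology.IsBounded (Set.range fun n : ℕ => (T^[n] x : H)) := by
  constructor
  · rintro ⟨u, hu⟩
    refine ⟨u, ?_⟩
    have : ∀ n : ℕ, T^[n] u = u := fun n => Function.iterate_fixed hu n
    simp [this]
  rintro ⟨x, hx⟩
  obtain ⟨R, hR⟩ := (Metric.isBounded_iff_subset_closedBall (x : H)).1 hx
  obtain ⟨m, hm0, key, u, huC, hu⟩ := asymp_center C hCc hCv (fun n => (T^[n] x : H)) x x.2 R
    (fun n => by simpa [dist_eq_norm] using hR ⟨n, rfl⟩)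
  refine ⟨⟨u, huC⟩, ?_⟩
  set v : C := ⟨u, huC⟩ with hv
  have hTu : ∀ c : ℝ, m < c → ∀ᶠ n in Filter.atTop, ‖(T^[n] x : H) - (T v : H)‖ ≤ c := by
    intro c hc
    obtain ⟨c', hmc, hcc⟩ := exists_between hc
    obtain ⟨N, hN⟩ := Filter.eventually_atTop.1 (hu c' hmc)
    set a : ℕ → ℝ := fun n => ‖(T^[n] x : H) - (T v : H)‖ ^ 2 with ha
    have hstep : ∀ n ≥ N, 2 * a (n + 1) ≤ c' ^ 2 + a n := by
      intro n hn
      have h := hT (T^[n] x) v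
      rw [← Function.iterate_succ_apply' T n x] at h
      simp only [Subtype.dist_eq, dist_eq_norm] at h
      rw [norm_sub_rev (T v : H)] at h
      have h2 := pow_le_pow_left₀ (norm_nonneg _) (hN (n + 1) (by omega)) 2
      simp only [ha]
      linarith
    have hind : ∀ k : ℕ, a (N + k) ≤ c' ^ 2 + a N * (1 / 2) ^ k := by
      intro k
      induction k with
      | zero => simp; positivity
      | succ k ih =>
        have := hstep (N + k) (by omega)
        rw [← add_assoc, pow_succ (1 / 2 : ℝ) k]
        linarith
    have hlim : Filter.Tendsto (fun k : ℕ => c' ^ 2 + a N * (1 / 2 : ℝ) ^ k) Filter.atTop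
        (nhds (c' ^ 2)) := by
      simpa using ((tendsto_pow_atTop_nhds_zero_of_lt_one (r := (1 / 2 : ℝ)) (by norm_num)
        (by norm_num)).const_mul (a N)).const_add (c' ^ 2)
    have hlt : c' ^ 2 < c ^ 2 := by nlinarith
    obtain ⟨K, hK⟩ := Filter.eventually_atTop.1 (hlim.eventually (gt_mem_nhds hlt))
    filter_upwards [Filter.eventually_ge_atTop (N + K)] with n hn
    obtain ⟨k, rfl⟩ := Nat.exists_eq_add_of_le (show N ≤ n by omega)
    have h1 := hind k
    have h2 := hK k (by omega)
    exact le_of_sq_le_sq (h1.trans h2.le) (hm0.trans hc.le)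
  have hfin : ‖(T v : H) - u‖ ^ 2 ≤ 0 := by
    have hk : ∀ c : ℝ, m < c → ‖(T v : H) - u‖ ^ 2 ≤ 4 * (c ^ 2 - m ^ 2) := fun c hc =>
      key _ (T v).2 _ huC c (hTu c hc) (hu c hc)
    have hcont : Filter.Tendsto (fun c : ℝ => 4 * (c ^ 2 - m ^ 2)) (nhdsWithin m (Set.Ioi m))
        (nhds 0) := by
      have : ContinuousAt (fun c : ℝ => 4 * (c ^ 2 - m ^ 2)) m := by fun_prop
      have h := this.tendsto.mono_left (nhdsWithin_le_nhds (s := Set.Ioi m))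
      simpa using h
    refine ge_of_tendsto hcont ?_
    filter_upwards [self_mem_nhdsWithin] with c hc using hk c hc
  apply Subtype.ext
  have h0 : ‖(T v : H) - u‖ = 0 := by
    have := norm_nonneg ((T v : H) - u)
    nlinarith
  exact sub_eq_zero.1 (norm_eq_zero.1 h0)
end

section
/- Let C be a nonempty bounded closed convex subset of a real Hilbert space H and T a metrically nonspreading mapping of C into itself (with the metric induced by the norm). Then T has a fixed point. -/
open Filter Topology in
theorem weak_cluster_aux {H : Type*} [NormedAddCommGroup H] [InnerProductSpace ℝ H]
    [CompleteSpace H] (A : ℕ → H) (R : ℝ) (hA : ∀ n, ‖A n‖ ≤ R) :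
    ∃ (U : Ultrafilter ℕ) (z : H), (U : Filter ℕ) ≤ atTop ∧
      ∀ y : H, Tendsto (fun n => inner ℝ (A n) y) U (𝓝 (inner ℝ z y)) := by
  let U : Ultrafilter ℕ := Ultrafilter.of atTop
  let F : ℕ → WeakDual ℝ H := fun n => StrongDual.toWeakDual (InnerProductSpace.toDual ℝ H (A n))
  have hc := WeakDual.isCompact_closedBall (𝕜 := ℝ) (E := H) 0 R
  have := hc.ultrafilter_le_nhds (U.map F) (by
    simp only [Filter.le_principal_iff]
    refine Filter.mem_map.2 (Filter.univ_mem' fun n => ?_)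
    have h2 : dist (InnerProductSpace.toDual ℝ H (A n)) 0 ≤ R := by
      rw [dist_zero_right, LinearIsometryEquiv.norm_map]
      exact hA n
    exact h2)
  obtain ⟨f, -, hf⟩ := this
  have hf' : Tendsto F U (𝓝 f) := hf
  refine ⟨U, (InnerProductSpace.toDual ℝ H).symm (WeakDual.toStrongDual f),
    Ultrafilter.of_le _, fun y => ?_⟩
  have h3 := ((WeakDual.eval_continuous y).tendsto f).comp hf'
  rw [InnerProductSpace.toDual_symm_apply]
  exact h3

open Filter Topology in
/-- Every metrically nonspreading self-mapping of a nonempty bounded closed convex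
subset of a real Hilbert space has a fixed point. -/
theorem stmt_7 {H : Type*} [NormedAddCommGroup H] [InnerProductSpace ℝ H]
    [CompleteSpace H] (C : Set H) (hC : C.Nonempty) (hCb : Bornology.IsBounded C)
    (hCc : IsClosed C) (hCv : Convex ℝ C) (T : C → C)
    (hT : ∀ x y : C, 2 * dist (T x) (T y) ^ 2 ≤ dist (T x) y ^ 2 + dist (T y) x ^ 2) :
    ∃ u : C, T u = u := by
  obtain ⟨x0, hx0⟩ := hC
  obtain ⟨R, hR⟩ := hCb.exists_norm_le
  let x : ℕ → C := fun n => T^[n] ⟨x0, hx0⟩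
  have hx : ∀ n, x (n + 1) = T (x n) := fun n => Function.iterate_succ_apply' T n _
  let S : ℕ → H := fun n => ∑ k ∈ Finset.range n, (x (k + 1) : H)
  let A : ℕ → H := fun n => (n : ℝ)⁻¹ • S n
  have hR0 : 0 ≤ R := (norm_nonneg _).trans (hR x0 hx0)
  have hS : ∀ n, ‖S n‖ ≤ n * R := fun n => by
    refine (norm_sum_le_of_le _ (fun k _ => hR _ (x (k+1)).2)).trans ?_
    simp
  have hA : ∀ n, ‖A n‖ ≤ R := fun n => by
    rcases Nat.eq_zero_or_pos n with rfl | hn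
    · simpa [A] using hR0
    have hn' : (0 : ℝ) < n := by exact_mod_cast hn
    simp only [A, norm_smul, norm_inv, Real.norm_natCast]
    rw [inv_mul_le_iff₀ hn']
    exact hS n
  obtain ⟨U, z, hU, hz⟩ := weak_cluster_aux A R hA
  have key : ∀ y : C, 0 ≤ 2 * inner ℝ z ((T y : H) - y) + (‖(y : H)‖ ^ 2 - ‖(T y : H)‖ ^ 2) := by
    intro y
    have hsum : ∀ n : ℕ, ‖(x n : H) - T y‖ ^ 2 - ‖(x 0 : H) - T y‖ ^ 2 ≤
        2 * inner ℝ (S n) ((T y : H) - y) + n * (‖(y : H)‖ ^ 2 - ‖(T y : H)‖ ^ 2) := by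
      intro n
      induction n with
      | zero => simp [S]
      | succ n ih =>
        have h1 := hT (x n) y
        rw [← hx, dist_comm (T y) (x n)] at h1
        simp only [Subtype.dist_eq, dist_eq_norm] at h1
        have h2 : S (n + 1) = S n + x (n + 1) := Finset.sum_range_succ _ _
        have h3 := norm_sub_sq_real (x (n + 1) : H) (y : H)
        have h4 := norm_sub_sq_real (x (n + 1) : H) (T y : H)
        rw [h2, inner_add_left, inner_sub_right (x (n + 1) : H)]
        push_cast
        linarith
    have hlim1 : Tendsto (fun n : ℕ => 2 * inner ℝ (A n) ((T y : H) - y) +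
        (‖(y : H)‖ ^ 2 - ‖(T y : H)‖ ^ 2)) U
        (𝓝 (2 * inner ℝ z ((T y : H) - y) + (‖(y : H)‖ ^ 2 - ‖(T y : H)‖ ^ 2))) :=
      ((hz _).const_mul 2).add_const _
    have hlim0 : Tendsto (fun n : ℕ => (n : ℝ)⁻¹ * (-‖(x 0 : H) - T y‖ ^ 2)) U (𝓝 0) := by
      have := (tendsto_inv_atTop_nhds_zero_nat (𝕜 := ℝ)).mul_const (-‖(x 0 : H) - T y‖ ^ 2)
      rw [zero_mul] at this
      exact this.mono_left hU
    refine le_of_tendsto_of_tendsto hlim0 hlim1 ?_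
    filter_upwards [hU (eventually_gt_atTop 0)] with n hn
    have hn' : (0 : ℝ) < n := by exact_mod_cast hn
    rw [inv_mul_le_iff₀ hn']
    simp only [A, real_inner_smul_left]
    have := hsum n
    have h5 : (n : ℝ) * (2 * ((n : ℝ)⁻¹ * inner ℝ (S n) ((T y : H) - y)) +
        (‖(y : H)‖ ^ 2 - ‖(T y : H)‖ ^ 2)) = 2 * inner ℝ (S n) ((T y : H) - y) +
        n * (‖(y : H)‖ ^ 2 - ‖(T y : H)‖ ^ 2) := by
      field_simp
    rw [h5]
    have := sq_nonneg ‖(x n : H) - T y‖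
    linarith
  obtain ⟨p, hp, hpz⟩ := exists_norm_eq_iInf_of_complete_convex ⟨x0, hx0⟩ hCc.isComplete hCv z
  rw [norm_eq_iInf_iff_real_inner_le_zero hCv hp] at hpz
  refine ⟨⟨p, hp⟩, ?_⟩
  have h1 := key ⟨p, hp⟩
  have h2 := hpz _ (T ⟨p, hp⟩).2
  have h3 := norm_sub_sq_real (T ⟨p, hp⟩ : H) p
  rw [inner_sub_left] at h2
  simp only [inner_sub_right, real_inner_self_eq_norm_sq] at h1 h2
  rw [real_inner_comm] at h3
  have h4 : ‖(T ⟨p, hp⟩ : H) - p‖ ^ 2 ≤ 0 := by linarith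
  have h5 : ‖(T ⟨p, hp⟩ : H) - p‖ = 0 := by
    have := sq_nonneg ‖(T ⟨p, hp⟩ : H) - p‖
    exact pow_eq_zero_iff (two_ne_zero) |>.1 (le_antisymm h4 this)
  exact Subtype.ext (sub_eq_zero.1 (norm_eq_zero.1 h5))
end

section
/- Let C be a nonempty bounded closed convex subset of a real Hilbert space H and T₁, …, T_m a finite family of metrically nonspreading mappings of C into itself (with the metric induced by the norm) such that T_j ∘ T_k = T_k ∘ T_j for all j, k ∈ {1, …, m}. Then the mappings T₁, …, T_m have a common fixed point, i.e., there exists p ∈ C with T_k p = p for all k ∈ {1, …, m}. -/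
open Filter Topology

lemma aux_center {H : Type*} [NormedAddCommGroup H] [InnerProductSpace ℝ H]
    [CompleteSpace H] (C : Set H) (hC : C.Nonempty)
    (hCc : IsClosed C) (hCv : Convex ℝ C) (f : H → ℝ) (hf0 : ∀ y ∈ C, 0 ≤ f y)
    (hmid : ∀ u ∈ C, ∀ v ∈ C,
      f ((1/2 : ℝ) • u + (1/2 : ℝ) • v) ≤ (f u + f v) / 2 - ‖u - v‖ ^ 2 / 4)
    (M : ℝ) (hM : ∀ u ∈ C, ∀ v ∈ C, f u ≤ f v + M * ‖u - v‖) :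
    ∃ p ∈ C, ∀ y ∈ C, f y ≤ f p → y = p := by
  set m := sInf (f '' C) with hm
  have hbdd : BddBelow (f '' C) := ⟨0, by rintro _ ⟨y, hy, rfl⟩; exact hf0 y hy⟩
  have hmle : ∀ y ∈ C, m ≤ f y := fun y hy => csInf_le hbdd ⟨y, hy, rfl⟩
  have hmidC : ∀ u ∈ C, ∀ v ∈ C, (1/2 : ℝ) • u + (1/2 : ℝ) • v ∈ C := fun u hu v hv =>
    hCv hu hv (by norm_num) (by norm_num) (by norm_num)
  have hex : ∀ k : ℕ, ∃ y ∈ C, f y < m + 1 / ((k : ℝ) + 1) := by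
    intro k
    have : m < m + 1 / ((k : ℝ) + 1) := by
      have : 0 < 1 / ((k : ℝ) + 1) := by positivity
      linarith
    obtain ⟨_, ⟨y, hy, rfl⟩, h⟩ := exists_lt_of_csInf_lt (hC.image f) this
    exact ⟨y, hy, h⟩
  choose y hyC hy using hex
  have hlim : Tendsto (fun k : ℕ => 1 / ((k : ℝ) + 1)) atTop (𝓝 0) :=
    tendsto_one_div_add_atTop_nhds_zero_nat
  have hcau : CauchySeq y := by
    rw [Metric.cauchySeq_iff]
    intro ε hε
    have h1 : ∀ᶠ k : ℕ in atTop, 1 / ((k : ℝ) + 1) < ε ^ 2 / 4 :=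
      hlim.eventually (gt_mem_nhds (by positivity))
    obtain ⟨N, hN⟩ := eventually_atTop.1 h1
    refine ⟨N, fun a ha b hb => ?_⟩
    have h2 := hmid _ (hyC a) _ (hyC b)
    have h3 := hmle _ (hmidC _ (hyC a) _ (hyC b))
    have := hN a ha
    have := hN b hb
    have := hy a
    have := hy b
    rw [dist_eq_norm]
    apply lt_of_pow_lt_pow_left₀ 2 hε.le
    linarith
  obtain ⟨p, hp⟩ := cauchySeq_tendsto_of_complete hcau
  have hpC : p ∈ C := hCc.mem_of_tendsto hp (Eventually.of_forall hyC)
  have hfp : f p ≤ m := by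
    have h1 : Tendsto (fun k : ℕ => (m + 1 / ((k : ℝ) + 1)) + M * ‖p - y k‖) atTop
        (𝓝 ((m + 0) + M * ‖p - p‖)) :=
      (hlim.const_add m).add (((tendsto_const_nhds.sub hp).norm).const_mul M)
    have h2 := ge_of_tendsto' h1 (fun k => by
      have := hM p hpC (y k) (hyC k)
      have := hy k
      linarith : ∀ k : ℕ, f p ≤ _)
    simpa using h2
  refine ⟨p, hpC, fun z hz h => ?_⟩
  have h2 := hmid z hz p hpC
  have h3 := hmle _ (hmidC z hz p hpC)
  have h4 : ‖z - p‖ ^ 2 ≤ 0 := by linarith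
  have h5 : ‖z - p‖ = 0 := by
    have := sq_nonneg ‖z - p‖
    exact pow_eq_zero_iff (two_ne_zero) |>.1 (le_antisymm h4 this)
  exact sub_eq_zero.1 (norm_eq_zero.1 h5)

lemma aux_mid {H : Type*} [NormedAddCommGroup H] [InnerProductSpace ℝ H] (a b : ℝ)
    (hab : a + b = 1) (x u v : H) :
    ‖x - (a • u + b • v)‖ ^ 2 = a * ‖x - u‖ ^ 2 + b * ‖x - v‖ ^ 2 - a * b * ‖u - v‖ ^ 2 := by
  have e1 : x - (a • u + b • v) = a • (x - u) + b • (x - v) := by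
    have : b = 1 - a := by linarith
    subst this
    module
  have e2 : u - v = (x - v) - (x - u) := by abel
  rw [e1, e2, norm_add_sq_real, norm_sub_sq_real (x - v) (x - u), norm_smul, norm_smul, inner_smul_left,
    inner_smul_right, real_inner_comm (x - u) (x - v)]
  simp only [mul_pow, Real.norm_eq_abs, sq_abs, conj_trivial]
  have : b = 1 - a := by linarith
  subst this
  ring

lemma aux_fix {H : Type*} [NormedAddCommGroup H] [InnerProductSpace ℝ H]
    [CompleteSpace H] (C : Set H) (hC : C.Nonempty) (hCb : Bornology.IsBounded C)
    (hCc : IsClosed C) (hCv : Convex ℝ C) (T : H → H) (hTC : ∀ x ∈ C, T x ∈ C)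
    (hT : ∀ x ∈ C, ∀ y ∈ C,
      2 * ‖T x - T y‖ ^ 2 ≤ ‖T x - y‖ ^ 2 + ‖T y - x‖ ^ 2) :
    ∃ p ∈ C, T p = p := by
  obtain ⟨x0, hx0⟩ := hC
  obtain ⟨D, hD⟩ := hCb.exists_norm_le
  have hD0 : 0 ≤ D := (norm_nonneg _).trans (hD x0 hx0)
  have hdist : ∀ u ∈ C, ∀ v ∈ C, ‖u - v‖ ≤ 2 * D := fun u hu v hv =>
    (norm_sub_le u v).trans (by linarith [hD u hu, hD v hv])
  let x : ℕ → H := fun n => T^[n] x0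
  have hxs : ∀ n, x (n+1) = T (x n) := fun n => Function.iterate_succ_apply' T n x0
  have hxC : ∀ n, x n ∈ C := by
    intro n
    induction n with
    | zero => exact hx0
    | succ n ih => rw [hxs]; exact hTC _ ih
  let A : H → Set ℝ := fun y => {c | ∀ᶠ n in atTop, ‖x n - y‖ ^ 2 ≤ c}
  let f : H → ℝ := fun y => sInf (A y)
  have hA0 : ∀ y, ∀ c ∈ A y, 0 ≤ c := by
    intro y c hc
    obtain ⟨n, hn⟩ := Eventually.exists (show ∀ᶠ n in atTop, ‖x n - y‖ ^ 2 ≤ c from hc)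
    exact (sq_nonneg _).trans hn
  have hAne : ∀ y ∈ C, (A y).Nonempty := fun y hy => ⟨(2 * D) ^ 2, Eventually.of_forall
    fun n => pow_le_pow_left₀ (norm_nonneg _) (hdist _ (hxC n) _ hy) 2⟩
  have hup : ∀ y ∈ C, ∀ ε > 0, ∀ᶠ n in atTop, ‖x n - y‖ ^ 2 ≤ f y + ε := by
    intro y hy ε hε
    obtain ⟨c, hc, hlt⟩ := exists_lt_of_csInf_lt (hAne y hy) (show f y < f y + ε by linarith)
    have hc' : ∀ᶠ n in atTop, ‖x n - y‖ ^ 2 ≤ c := hc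
    filter_upwards [hc'] with n hn
    linarith
  have hlow : ∀ y c, (∀ᶠ n in atTop, ‖x n - y‖ ^ 2 ≤ c) → f y ≤ c := fun y c h =>
    csInf_le ⟨0, fun c hc => hA0 y c hc⟩ h
  obtain ⟨p, hp, huniq⟩ := aux_center C ⟨x0, hx0⟩ hCc hCv f
    (fun y hy => le_csInf (hAne y hy) (hA0 y))
    (by
      intro u hu v hv
      refine le_of_forall_pos_le_add fun ε hε => hlow _ _ ?_
      filter_upwards [hup u hu ε hε, hup v hv ε hε] with n h1 h2
      rw [aux_mid (1/2) (1/2) (by norm_num)]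
      linarith)
    (4 * D)
    (by
      intro u hu v hv
      refine le_of_forall_pos_le_add fun ε hε => hlow _ _ ?_
      filter_upwards [hup v hv ε hε] with n h1
      have h2 := hdist _ (hxC n) _ hu
      have h3 := hdist _ (hxC n) _ hv
      have h4 : ‖x n - u‖ ≤ ‖x n - v‖ + ‖u - v‖ := by
        have := norm_sub_le_norm_sub_add_norm_sub (x n) v u
        rwa [norm_sub_rev v u] at this
      nlinarith [norm_nonneg (x n - u), norm_nonneg (x n - v), norm_nonneg (u - v)])
  refine ⟨p, hp, huniq _ (hTC p hp) ?_⟩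
  have key : f (T p) ≤ (f p + f (T p)) / 2 := by
    refine le_of_forall_pos_le_add fun ε hε => hlow _ _ ?_
    suffices hs : ∀ᶠ n in atTop, ‖x (n + 1) - T p‖ ^ 2 ≤ (f p + f (T p)) / 2 + ε by
      obtain ⟨N, hN⟩ := eventually_atTop.1 hs
      refine eventually_atTop.2 ⟨N + 1, fun n hn => ?_⟩
      obtain ⟨k, rfl⟩ : ∃ k, n = k + 1 := ⟨n - 1, by omega⟩
      exact hN k (by omega)
    have h1 := (tendsto_add_atTop_nat 1).eventually (hup p hp ε hε)
    filter_upwards [h1, hup _ (hTC p hp) ε hε] with n h1 h2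
    have h3 := hT _ (hxC n) p hp
    rw [← hxs, norm_sub_rev (T p)] at h3
    linarith
  linarith

lemma aux_closed_convex {H : Type*} [NormedAddCommGroup H] [InnerProductSpace ℝ H]
    (C : Set H) (hCc : IsClosed C) (hCv : Convex ℝ C) (T : H → H)
    (hT : ∀ x ∈ C, ∀ y ∈ C,
      2 * ‖T x - T y‖ ^ 2 ≤ ‖T x - y‖ ^ 2 + ‖T y - x‖ ^ 2) :
    IsClosed {x | x ∈ C ∧ T x = x} ∧ Convex ℝ {x | x ∈ C ∧ T x = x} := by
  have hq : ∀ x ∈ C, ∀ p ∈ C, T p = p → ‖T x - p‖ ^ 2 ≤ ‖x - p‖ ^ 2 := by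
    intro x hx p hp h
    have := hT x hx p hp
    rw [h, norm_sub_rev p x] at this
    linarith
  constructor
  · refine IsSeqClosed.isClosed ?_
    intro s q hs hq'
    have hqC : q ∈ C := hCc.mem_of_tendsto hq' (Eventually.of_forall fun n => (hs n).1)
    refine ⟨hqC, ?_⟩
    have h1 : Tendsto (fun n => ‖T q - s n‖ ^ 2) atTop (𝓝 (‖T q - q‖ ^ 2)) :=
      ((tendsto_const_nhds.sub hq').norm).pow 2
    have h2 : Tendsto (fun n => ‖q - s n‖ ^ 2) atTop (𝓝 (‖q - q‖ ^ 2)) :=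
      ((tendsto_const_nhds.sub hq').norm).pow 2
    have h3 := le_of_tendsto_of_tendsto' h1 h2 fun n => hq q hqC _ (hs n).1 (hs n).2
    have h4 : ‖T q - q‖ ^ 2 = 0 := le_antisymm (by simpa using h3) (sq_nonneg _)
    exact sub_eq_zero.1 (norm_eq_zero.1 (pow_eq_zero_iff two_ne_zero |>.1 h4))
  · intro u hu v hv a b ha hb hab
    have hz := hCv hu.1 hv.1 ha hb hab
    refine ⟨hz, ?_⟩
    have h1 := hq _ hz u hu.1 hu.2
    have h2 := hq _ hz v hv.1 hv.2
    have h3 := aux_mid a b hab (T (a • u + b • v)) u v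
    have h5 := aux_mid a b hab (a • u + b • v) u v
    rw [sub_self, norm_zero] at h5
    have h6 := mul_le_mul_of_nonneg_left h1 ha
    have h7 := mul_le_mul_of_nonneg_left h2 hb
    have h4 : ‖T (a • u + b • v) - (a • u + b • v)‖ ^ 2 = 0 :=
      le_antisymm (by linarith) (sq_nonneg _)
    exact sub_eq_zero.1 (norm_eq_zero.1 (pow_eq_zero_iff two_ne_zero |>.1 h4))

/-- A commutative finite family of metrically nonspreading self-mappings of a nonempty
bounded closed convex subset of a real Hilbert space has a common fixed point. -/
theorem stmt_8 {H : Type*} [NormedAddCommGroup H] [InnerProductSpace ℝ H]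
    [CompleteSpace H] (C : Set H) (hC : C.Nonempty) (hCb : Bornology.IsBounded C)
    (hCc : IsClosed C) (hCv : Convex ℝ C) (m : ℕ) (T : Fin m → C → C)
    (hT : ∀ k, ∀ x y : C,
      2 * dist (T k x) (T k y) ^ 2 ≤ dist (T k x) y ^ 2 + dist (T k y) x ^ 2)
    (hcomm : ∀ j k, T j ∘ T k = T k ∘ T j) :
    ∃ p : C, ∀ k, T k p = p := by
  classical
  let S : Fin m → H → H := fun k x => if h : x ∈ C then (T k ⟨x, h⟩ : H) else x
  have hS : ∀ k x (h : x ∈ C), S k x = T k ⟨x, h⟩ := fun k x h => dif_pos h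
  have hSC : ∀ k, ∀ x ∈ C, S k x ∈ C := fun k x h => by rw [hS k x h]; exact (T k _).2
  have hSc : ∀ j k, ∀ x ∈ C, S j (S k x) = S k (S j x) := by
    intro j k x h
    have := congrFun (hcomm j k) ⟨x, h⟩
    simp only [Function.comp] at this
    rw [hS k x h, hS j x h, hS _ _ (T k _).2, hS _ _ (T j _).2, Subtype.coe_eta,
      Subtype.coe_eta, this]
  have hSn : ∀ k, ∀ x ∈ C, ∀ y ∈ C,
      2 * ‖S k x - S k y‖ ^ 2 ≤ ‖S k x - y‖ ^ 2 + ‖S k y - x‖ ^ 2 := by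
    intro k x hx y hy
    have := hT k ⟨x, hx⟩ ⟨y, hy⟩
    simp only [Subtype.dist_eq, dist_eq_norm] at this
    rw [hS k x hx, hS k y hy]
    exact this
  have main : ∀ s : Finset (Fin m), ({x | x ∈ C ∧ ∀ k ∈ s, S k x = x}).Nonempty ∧
      IsClosed {x | x ∈ C ∧ ∀ k ∈ s, S k x = x} ∧
      Convex ℝ {x | x ∈ C ∧ ∀ k ∈ s, S k x = x} := by
    intro s
    induction s using Finset.induction_on with
    | empty => simpa using ⟨hC, hCc, hCv⟩
    | insert a s _ ih =>
      obtain ⟨h1, h2, h3⟩ := ih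
      have hsub : {x | x ∈ C ∧ ∀ k ∈ s, S k x = x} ⊆ C := fun x hx => hx.1
      have heq : {x | x ∈ C ∧ ∀ k ∈ insert a s, S k x = x} =
          {x | x ∈ {x | x ∈ C ∧ ∀ k ∈ s, S k x = x} ∧ S a x = x} := by
        ext x
        simp only [Finset.forall_mem_insert, Set.mem_ofPred_eq]
        tauto
      rw [heq]
      have hn := fun x (hx : x ∈ {x | x ∈ C ∧ ∀ k ∈ s, S k x = x}) y
        (hy : y ∈ {x | x ∈ C ∧ ∀ k ∈ s, S k x = x}) => hSn a x hx.1 y hy.1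
      refine ⟨?_, aux_closed_convex _ h2 h3 (S a) hn⟩
      obtain ⟨p, hp, hfix⟩ := aux_fix _ h1 (hCb.subset hsub) h2 h3 (S a)
        (fun x hx => ⟨hSC a x hx.1, fun k hk => by rw [hSc k a x hx.1, hx.2 k hk]⟩) hn
      exact ⟨p, hp, hfix⟩
  obtain ⟨p, hp, hfix⟩ := (main Finset.univ).1
  refine ⟨⟨p, hp⟩, fun k => Subtype.ext ?_⟩
  rw [← hS k p hp]
  exact hfix k (Finset.mem_univ k)
end

section
/- Let (X,d) be a metric space, T a metrically nonspreading mapping of X into itself, and {x_n} a sequence in X such that the asymptotic center AC({x_n}) equals the singleton {p} for some p ∈ X and d(Tx_n, x_n) → 0 as n → ∞. Then Tp = p. -/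
open Filter

/-- Demiclosed principle: if `T` is metrically nonspreading, the asymptotic center of
`{xₙ}` is `{p}`, and `d(Txₙ, xₙ) → 0`, then `p` is a fixed point of `T`. -/
theorem stmt_9 {X : Type*} [MetricSpace X] (T : X → X)
    (hT : ∀ x y : X, 2 * dist (T x) (T y) ^ 2 ≤ dist (T x) y ^ 2 + dist (T y) x ^ 2)
    (x : ℕ → X) (p : X)
    (hAC : {u : X | limsup (fun n => dist u (x n)) atTop
              = ⨅ y : X, limsup (fun n => dist y (x n)) atTop} = {p})
    (hconv : Tendsto (fun n => dist (T (x n)) (x n)) atTop (nhds 0)) :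
    T p = p := by
  have hmem : ∀ u : X, limsup (fun n => dist u (x n)) atTop
      = (⨅ y : X, limsup (fun n => dist y (x n)) atTop) → u = p := by
    intro u hu
    have : u ∈ {u : X | limsup (fun n => dist u (x n)) atTop
              = ⨅ y : X, limsup (fun n => dist y (x n)) atTop} := hu
    rw [hAC] at this
    exact this
  have hp : limsup (fun n => dist p (x n)) atTop
      = (⨅ y : X, limsup (fun n => dist y (x n)) atTop) := by
    have : p ∈ ({p} : Set X) := rfl
    rw [← hAC] at this
    exact this
  have hnn : ∀ u : X, 0 ≤ limsup (fun n => dist u (x n)) atTop := by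
    intro u
    rw [limsup_eq]
    apply Real.sInf_nonneg
    intro a ha
    obtain ⟨n, hn⟩ := Filter.Eventually.exists ha
    exact dist_nonneg.trans hn
  apply hmem
  by_cases hb : ∃ C, ∀ᶠ n in atTop, dist p (x n) ≤ C
  · obtain ⟨C, hC⟩ := hb
    have hge : (⨅ y : X, limsup (fun n => dist y (x n)) atTop)
        ≤ limsup (fun n => dist (T p) (x n)) atTop :=
      ciInf_le ⟨0, by rintro _ ⟨u, rfl⟩; exact hnn u⟩ (T p)
    refine le_antisymm ?_ hge
    rw [← hp]
    refine le_of_forall_gt_imp_ge_of_dense fun c hc => ?_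
    obtain ⟨c', h1, h2⟩ := exists_between hc
    have h0 := hnn p
    have hbd : IsBoundedUnder (· ≤ ·) atTop (fun n => dist p (x n)) := ⟨C, by simpa using hC⟩
    have hb' := eventually_lt_of_limsup_lt h1 hbd
    obtain ⟨K, hK⟩ : ∃ K, K = 4 * (dist (T p) p + c') + 2 * c' + 1 := ⟨_, rfl⟩
    have hKpos : 0 < K := by have := dist_nonneg (x := T p) (y := p); linarith
    have hd : 0 < (c ^ 2 - c' ^ 2) / K := by
      apply div_pos _ hKpos
      nlinarith
    have he := hconv.eventually_lt_const hd
    refine limsup_le_of_le ?_ ?_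
    · exact IsBoundedUnder.isCoboundedUnder_le ⟨0, by simp⟩
    filter_upwards [hb', he] with n hbn hen
    have t := hT p (x n)
    have e0 := dist_nonneg (x := T (x n)) (y := x n)
    have a0 := dist_nonneg (x := T p) (y := x n)
    have b0 := dist_nonneg (x := p) (y := x n)
    have D0 := dist_nonneg (x := T p) (y := T (x n))
    have F0 := dist_nonneg (x := T (x n)) (y := p)
    have tr1 := dist_triangle (T p) (T (x n)) (x n)
    have tr2 := dist_triangle (T (x n)) (x n) p
    have tr3 := dist_triangle (T p) p (x n)
    rw [dist_comm (x n) p] at tr2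
    rw [lt_div_iff₀ hKpos] at hen
    generalize dist (T (x n)) (x n) = e at *
    generalize dist (T p) (x n) = a at *
    generalize dist p (x n) = b at *
    generalize dist (T p) (T (x n)) = D at *
    generalize dist (T (x n)) p = F at *
    generalize dist (T p) p = q at *
    have hF : F ^ 2 ≤ (e + b) ^ 2 := pow_le_pow_left₀ F0 tr2 2
    have hD : a ^ 2 - 2 * a * e + e ^ 2 ≤ D ^ 2 ∨ a < e := by
      rcases lt_or_ge a e with h | h
      · exact Or.inr h
      · left
        have := pow_le_pow_left₀ (by linarith : 0 ≤ a - e) (by linarith : a - e ≤ D) 2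
        nlinarith
    have hae : a * e ≤ (q + c') * e := mul_le_mul_of_nonneg_right (by linarith) e0
    have hbe : b * e ≤ c' * e := mul_le_mul_of_nonneg_right hbn.le e0
    have hbb : b ^ 2 ≤ c' ^ 2 := pow_le_pow_left₀ b0 hbn.le 2
    have hfin : a ^ 2 ≤ c ^ 2 := by
      subst hK
      rcases hD with h | h
      · nlinarith
      · have : a ^ 2 ≤ a * e := by nlinarith
        have h3 : 0 ≤ c' * e := mul_nonneg (by linarith) e0
        have h4 : 0 ≤ a * e := mul_nonneg a0 e0
        nlinarith
    exact (pow_le_pow_iff_left₀ a0 (by linarith) two_ne_zero).1 hfin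
  · have hz : ∀ u : X, limsup (fun n => dist u (x n)) atTop = 0 := by
      intro u
      rw [limsup_eq]
      suffices h : {a : ℝ | ∀ᶠ n in atTop, dist u (x n) ≤ a} = ∅ by
        rw [h]
        exact Real.sInf_empty
      rw [Set.eq_empty_iff_forall_notMem]
      intro a ha
      apply hb
      refine ⟨dist p u + a, ?_⟩
      filter_upwards [ha] with n hn
      exact (dist_triangle p u (x n)).trans (by linarith)
    rw [← hp, hz, hz]
end

section
/- Let (X,d) be a metric space and T a metrically nonspreading mapping of X into itself that has at least one fixed point. Then T is asymptotically regular, i.e., d(T^{n+1}x, T^{n}x) → 0 as n → ∞ for every x ∈ X. -/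
open Filter

lemma limsup_add_le_aux (f g : ℕ → ENNReal) (hf : limsup f atTop ≠ ⊤)
    (hg : limsup g atTop ≠ ⊤) :
    limsup (fun n => f n + g n) atTop ≤ limsup f atTop + limsup g atTop := by
  refine ENNReal.le_of_forall_pos_le_add fun ε hε _ => ?_
  have he : ((ε : ENNReal) / 2) ≠ 0 := by simp [hε.ne']
  have h1 := eventually_lt_of_limsup_lt (ENNReal.lt_add_right hf he)
  have h2 := eventually_lt_of_limsup_lt (ENNReal.lt_add_right hg he)
  refine limsup_le_of_le (h := ?_)
  filter_upwards [h1, h2] with n h1 h2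
  refine (add_le_add h1.le h2.le).trans_eq ?_
  rw [add_add_add_comm, ENNReal.add_halves]

/-- Every metrically nonspreading mapping of a metric space into itself with a fixed
point is asymptotically regular. -/
theorem stmt_10 {X : Type*} [MetricSpace X] (T : X → X)
    (hT : ∀ x y : X, 2 * dist (T x) (T y) ^ 2 ≤ dist (T x) y ^ 2 + dist (T y) x ^ 2)
    (hfix : ∃ u : X, T u = u) (x : X) :
    Tendsto (fun n : ℕ => dist (T^[n + 1] x) (T^[n] x)) atTop (nhds 0) := by
  obtain ⟨u, hu⟩ := hfix
  have hb : ∀ n, dist (T^[n] x) u ≤ dist x u := by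
    intro n
    induction n with
    | zero => simp
    | succ n ih =>
      rw [Function.iterate_succ_apply']
      have h := hT (T^[n] x) u
      rw [hu, dist_comm u] at h
      have : dist (T (T^[n] x)) u ≤ dist (T^[n] x) u :=
        le_of_sq_le_sq (by linarith) dist_nonneg
      linarith
  set C : ℝ := (2 * dist x u) ^ 2 with hC
  let a : ℕ → ℕ → ℝ := fun k n => dist (T^[n + k] x) (T^[n] x) ^ 2
  have ha0 : ∀ k n, 0 ≤ a k n := fun k n => sq_nonneg _
  have haC : ∀ k n, a k n ≤ C := by
    intro k n
    have h1 := dist_triangle_right (T^[n + k] x) (T^[n] x) u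
    have h2 := hb (n + k)
    have h3 := hb n
    exact pow_le_pow_left₀ dist_nonneg (by linarith) 2
  have hrec : ∀ k n, 2 * a (k + 1) (n + 1) ≤ a (k + 2) n + a k (n + 1) := by
    intro k n
    have h := hT (T^[n + 1 + k] x) (T^[n] x)
    simp only [← Function.iterate_succ_apply' T] at h
    have e1 : (n + 1 + k).succ = n + (k + 2) := by omega
    have e2 : n + 1 + (k + 1) = n + (k + 2) := by omega
    rw [e1, Nat.succ_eq_add_one, dist_comm (T^[n+1] x) (T^[n + 1 + k] x)] at h
    simp only [a, e2]
    exact h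
  let M : ℕ → ENNReal := fun k => limsup (fun n => ENNReal.ofReal (a k n)) atTop
  have hMC : ∀ k, M k ≤ ENNReal.ofReal C := fun k =>
    limsup_le_of_le (h := Eventually.of_forall fun n => ENNReal.ofReal_le_ofReal (haC k n))
  have hMfin : ∀ k, M k ≠ ⊤ := fun k => ne_top_of_le_ne_top ENNReal.ofReal_ne_top (hMC k)
  have hM0 : M 0 = 0 := by simp [M, a]
  have hMrec : ∀ k, 2 * M (k + 1) ≤ M (k + 2) + M k := by
    intro k
    have s1 : limsup (fun n => ENNReal.ofReal (a (k + 1) (n + 1))) atTop = M (k + 1) :=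
      limsup_nat_add (fun n => ENNReal.ofReal (a (k + 1) n)) 1
    have s2 : limsup (fun n => ENNReal.ofReal (a k (n + 1))) atTop = M k :=
      limsup_nat_add (fun n => ENNReal.ofReal (a k n)) 1
    rw [← s1, ← s2, ← ENNReal.limsup_const_mul_of_ne_top (by simp)]
    refine le_trans (limsup_le_limsup (Eventually.of_forall fun n => ?_))
      (limsup_add_le_aux _ _ (hMfin (k + 2)) (s2 ▸ hMfin k))
    have := ENNReal.ofReal_le_ofReal (hrec k n)
    rw [ENNReal.ofReal_mul (by norm_num), ENNReal.ofReal_add (ha0 _ _) (ha0 _ _)] at this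
    simpa using this
  let m : ℕ → ℝ := fun k => (M k).toReal
  have hmC : ∀ k, m k ≤ C := fun k =>
    ENNReal.toReal_le_of_le_ofReal (sq_nonneg _) (hMC k)
  have hm0 : m 0 = 0 := by simp [m, hM0]
  have hmrec : ∀ k, 2 * m (k + 1) ≤ m (k + 2) + m k := by
    intro k
    have := ENNReal.toReal_mono (by simp [hMfin]) (hMrec k)
    rw [ENNReal.toReal_mul, ENNReal.toReal_add (hMfin _) (hMfin _)] at this
    simpa using this
  have hd : ∀ k, m 1 ≤ m (k + 1) - m k := by
    intro k
    induction k with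
    | zero => simp [hm0]
    | succ k ih => have := hmrec k; linarith
  have hlin : ∀ k : ℕ, k * m 1 ≤ m k := by
    intro k
    induction k with
    | zero => simp [hm0]
    | succ k ih => have := hd k; push_cast; linarith
  have hm1 : m 1 ≤ 0 := by
    by_contra! h
    obtain ⟨k, hk⟩ := exists_nat_gt (C / m 1)
    rw [div_lt_iff₀ h] at hk
    linarith [hlin k, hmC k]
  have hM1 : M 1 = 0 := by
    have : m 1 = 0 := le_antisymm hm1 ENNReal.toReal_nonneg
    rcases (ENNReal.toReal_eq_zero_iff _).1 this with h | h
    · exact h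
    · exact absurd h (hMfin 1)
  have ht : Tendsto (fun n => ENNReal.ofReal (a 1 n)) atTop (nhds 0) :=
    tendsto_of_le_liminf_of_limsup_le (by simp) hM1.le
  have ht2 := (ENNReal.tendsto_toReal (by simp : (0 : ENNReal) ≠ ⊤)).comp ht
  have ht3 := (Real.continuous_sqrt.tendsto _).comp ht2
  simpa [Function.comp_def, a, ENNReal.toReal_ofReal, Real.sqrt_sq] using ht3
end

section
/- Let (X,d) be a metric space and T a firmly metrically nonspreading mapping of X into itself that has at least one fixed point. Then T is asymptotically regular, i.e., d(T^{n+1}x, T^{n}x) → 0 as n → ∞ for every x ∈ X. -/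
open Filter

/-- Every firmly metrically nonspreading mapping of a metric space into itself with a
fixed point is asymptotically regular. -/
theorem stmt_11 {X : Type*} [MetricSpace X] (T : X → X)
    (hT : ∀ x y : X, 2 * dist (T x) (T y) ^ 2 + dist (T x) x ^ 2 + dist (T y) y ^ 2
      ≤ dist (T x) y ^ 2 + dist (T y) x ^ 2)
    (hfix : ∃ u : X, T u = u) (x : X) :
    Tendsto (fun n : ℕ => dist (T^[n + 1] x) (T^[n] x)) atTop (nhds 0) := by
  obtain ⟨u, hu⟩ := hfix
  have key : ∀ n : ℕ, dist (T^[n + 1] x) (T^[n] x) ^ 2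
      ≤ dist (T^[n] x) u ^ 2 - dist (T^[n + 1] x) u ^ 2 := by
    intro n
    have h := hT (T^[n] x) u
    rw [hu, dist_self, dist_comm u (T^[n] x), ← Function.iterate_succ_apply' T n x] at h
    simp only [Nat.succ_eq_add_one] at h
    linarith
  have hanti : Antitone (fun n : ℕ => dist (T^[n] x) u ^ 2) := by
    refine antitone_nat_of_succ_le fun n => ?_
    have h1 := key n
    have h2 := sq_nonneg (dist (T^[n + 1] x) (T^[n] x))
    linarith
  have hbdd : BddBelow (Set.range (fun n : ℕ => dist (T^[n] x) u ^ 2)) :=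
    ⟨0, by rintro _ ⟨n, rfl⟩; exact sq_nonneg _⟩
  have hlim := tendsto_atTop_ciInf hanti hbdd
  have hdiff := hlim.sub (hlim.comp (tendsto_add_atTop_nat 1))
  rw [sub_self] at hdiff
  have hsq : Tendsto (fun n : ℕ => dist (T^[n + 1] x) (T^[n] x) ^ 2) atTop (nhds 0) :=
    squeeze_zero (fun n => sq_nonneg _) key hdiff
  have hs := hsq.sqrt
  simpa only [Real.sqrt_sq dist_nonneg, Real.sqrt_zero] using hs
end

section
/- Let C be a nonempty closed convex subset of a real Hilbert space H and T a metrically nonspreading mapping of C into itself (with the metric induced by the norm) whose fixed point set is nonempty. Then for every x ∈ C the sequence of iterates {Tⁿx} converges weakly to a fixed point of T, i.e., there exists u ∈ C with Tu = u such that ⟪Tⁿx, y⟫ → ⟪u, y⟫ as n → ∞ for every y ∈ H. -/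
open Filter
open scoped RealInnerProductSpace

/-- A bounded nonspreading orbit is asymptotically regular (squared version). -/
lemma aux_reg (a : ℕ → ℕ → ℝ) (B : ℝ) (h0 : ∀ n, a n n = 0) (hpos : ∀ m n, 0 ≤ a m n)
    (hB : ∀ m n, a m n ≤ B)
    (h : ∀ m n, 2 * a (m+1) (n+1) ≤ a (m+1) n + a m (n+1)) :
    Tendsto (fun n => a n (n+1)) atTop (nhds 0) := by
  set F : ℕ → ℝ := fun k => limsup (fun n => a n (n+k)) atTop with hF
  have bd : ∀ k, IsBoundedUnder (· ≤ ·) atTop (fun n => a n (n+k)) := fun k =>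
    isBoundedUnder_of ⟨B, fun n => hB _ _⟩
  have bd' : ∀ k, IsBoundedUnder (· ≥ ·) atTop (fun n => a n (n+k)) := fun k =>
    isBoundedUnder_of ⟨0, fun n => hpos _ _⟩
  have key : ∀ k, ∀ e : ℝ, F k < e → ∀ᶠ n in atTop, a n (n+k) < e := fun k e he =>
    eventually_lt_of_limsup_lt he (bd k)
  have le : ∀ k, ∀ e : ℝ, (∀ᶠ n in atTop, a n (n+k) ≤ e) → F k ≤ e := fun k e he =>
    limsup_le_of_le (bd' k).isCoboundedUnder_le he
  have F0 : F 0 = 0 := by simp [hF, h0]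
  have FB : ∀ k, F k ≤ B := fun k => le k B (Eventually.of_forall fun n => hB _ _)
  have conv : ∀ k, 2 * F (k+1) ≤ F k + F (k+2) := by
    intro k
    refine le_of_forall_pos_le_add fun e he => ?_
    have h1 := (tendsto_add_atTop_nat 1).eventually (key k (F k + e/2) (by linarith))
    have h2 := key (k+2) (F (k+2) + e/2) (by linarith)
    have h3 : ∀ᶠ n in atTop, a (n+1) (n+1+(k+1)) ≤ (F k + F (k+2) + e)/2 := by
      filter_upwards [h1, h2] with n h1 h2
      have := h n (n+(k+1))
      rw [show n + (k+1) + 1 = n+1+(k+1) by ring] at this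
      rw [show n + 1 + k = n+(k+1) by ring] at h1
      rw [show n + (k+2) = n+1+(k+1) by ring] at h2
      linarith
    have h4 : ∀ᶠ n in atTop, a n (n+(k+1)) ≤ (F k + F (k+2) + e)/2 := by
      rw [eventually_atTop] at h3 ⊢
      obtain ⟨N, hN⟩ := h3
      refine ⟨N+1, fun n hn => ?_⟩
      obtain ⟨m, rfl⟩ : ∃ m, n = m+1 := ⟨n-1, by omega⟩
      exact hN m (by omega)
    have := le _ _ h4
    linarith
  have inc : ∀ k, F 1 ≤ F (k+1) - F k := by
    intro k
    induction k with
    | zero => simp [F0]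
    | succ k ih => have := conv k; simp only [add_assoc] at *; norm_num at *; linarith
  have lin : ∀ k : ℕ, k * F 1 ≤ F k := by
    intro k
    induction k with
    | zero => simp [F0]
    | succ k ih => have := inc k; push_cast; linarith
  have F1 : F 1 ≤ 0 := by
    by_contra hc
    push Not at hc
    obtain ⟨k, hk⟩ := exists_nat_gt (B / F 1)
    rw [div_lt_iff₀ hc] at hk
    linarith [lin k, FB k]
  rw [Metric.tendsto_nhds]
  intro e he
  filter_upwards [key 1 e (by linarith)] with n hn
  rw [Real.dist_eq, sub_zero, abs_of_nonneg (hpos _ _)]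
  exact hn

lemma aux_compact {H : Type*} [NormedAddCommGroup H] [InnerProductSpace ℝ H]
    [CompleteSpace H] (X : ℕ → H) (R : ℝ) (hR : ∀ n, ‖X n‖ ≤ R) (U : Ultrafilter ℕ) :
    ∃ u : H, ∀ y, Tendsto (fun n => ⟪X n, y⟫) U (nhds ⟪u, y⟫) := by
  let φ : ℕ → WeakDual ℝ H := fun n => StrongDual.toWeakDual (InnerProductSpace.toDual ℝ H (X n))
  have hK := WeakDual.isCompact_closedBall (𝕜 := ℝ) (E := H) 0 R
  obtain ⟨f, -, hf⟩ := hK.ultrafilter_le_nhds' (U.map φ) (by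
    refine Filter.mem_map.2 (Filter.univ_mem' fun n => ?_)
    simp [φ, hR n])
  refine ⟨(InnerProductSpace.toDual ℝ H).symm (WeakDual.toStrongDual f), fun y => ?_⟩
  have h1 : Tendsto φ U (nhds f) := hf
  have h2 := ((WeakDual.eval_continuous (𝕜 := ℝ) (E := H) y).tendsto f).comp h1
  rw [InnerProductSpace.toDual_symm_apply]
  exact h2

lemma aux_mem {H : Type*} [NormedAddCommGroup H] [InnerProductSpace ℝ H]
    [CompleteSpace H] (C : Set H) (hC : C.Nonempty) (hCc : IsClosed C) (hCv : Convex ℝ C)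
    (X : ℕ → H) (hX : ∀ n, X n ∈ C) (U : Ultrafilter ℕ) (u : H)
    (hu : ∀ y, Tendsto (fun n => ⟪X n, y⟫) U (nhds ⟪u, y⟫)) : u ∈ C := by
  obtain ⟨v, hv, hm⟩ := exists_norm_eq_iInf_of_complete_convex hC hCc.isComplete hCv u
  rw [norm_eq_iInf_iff_real_inner_le_zero hCv hv] at hm
  have h1 : ⟪u, u - v⟫ ≤ ⟪v, u - v⟫ := by
    refine le_of_tendsto (hu (u - v)) (Eventually.of_forall fun n => ?_)
    have := hm (X n) (hX n)
    rw [inner_sub_right, real_inner_comm, real_inner_comm v] at this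
    linarith
  have h2 : ⟪u - v, u - v⟫ ≤ 0 := by rw [inner_sub_left]; linarith
  have h3 : u - v = 0 := by
    rw [real_inner_self_eq_norm_sq] at h2
    exact norm_eq_zero.1 (pow_eq_zero_iff (two_ne_zero) |>.1 (le_antisymm h2 (sq_nonneg _)))
  rwa [sub_eq_zero.1 h3]

/-- If `T` is a metrically nonspreading self-mapping of a nonempty closed convex subset
of a real Hilbert space with nonempty fixed point set, then for every `x` the orbit
`{Tⁿx}` converges weakly to a fixed point of `T`. -/
theorem stmt_12 {H : Type*} [NormedAddCommGroup H] [InnerProductSpace ℝ H]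
    [CompleteSpace H] (C : Set H) (hC : C.Nonempty) (hCc : IsClosed C) (hCv : Convex ℝ C)
    (T : C → C)
    (hT : ∀ x y : C, 2 * dist (T x) (T y) ^ 2 ≤ dist (T x) y ^ 2 + dist (T y) x ^ 2)
    (hfix : ∃ u : C, T u = u) (x : C) :
    ∃ u : C, T u = u ∧
      ∀ y : H, Tendsto (fun n : ℕ => ⟪(T^[n] x : H), y⟫) atTop (nhds ⟪(u : H), y⟫) := by
  obtain ⟨p, hp⟩ := hfix
  set Y : ℕ → C := fun n => T^[n] x with hY
  set X : ℕ → H := fun n => (Y n : H) with hX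
  have hs : ∀ n, T (Y n) = Y (n+1) := fun n => (Function.iterate_succ_apply' T n x).symm
  have anti : ∀ q : C, T q = q → Antitone (fun n => dist (Y n) q) := by
    intro q hq
    refine antitone_nat_of_succ_le fun n => ?_
    have := hT (Y n) q
    rw [hq, hs, dist_comm q (Y n)] at this
    exact le_of_sq_le_sq (by linarith) dist_nonneg
  set R := dist (Y 0) p
  have hR : ∀ n, dist (Y n) p ≤ R := fun n => anti p hp (Nat.zero_le n)
  have hnorm : ∀ n, ‖X n‖ ≤ R + ‖(p : H)‖ := by
    intro n
    have := hR n
    rw [Subtype.dist_eq, dist_eq_norm] at this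
    have h2 := norm_add_le ((Y n : H) - p) p
    rw [sub_add_cancel] at h2
    simp only [hX]; linarith
  have hreg : Tendsto (fun n => dist (Y n) (Y (n+1)) ^ 2) atTop (nhds 0) := by
    refine aux_reg (fun m n => dist (Y m) (Y n) ^ 2) ((R+R)^2) (by simp)
      (fun _ _ => sq_nonneg _) (fun m n => ?_) (fun m n => ?_)
    · have := dist_triangle_right (Y m) (Y n) p
      have h1 := hR m
      have h2 := hR n
      exact pow_le_pow_left₀ dist_nonneg (by linarith) 2
    · have := hT (Y m) (Y n)
      rw [hs, hs, dist_comm (Y (n+1)) (Y m)] at this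
      exact this
  have hreg' : Tendsto (fun n => X n - X (n+1)) atTop (nhds 0) := by
    rw [tendsto_zero_iff_norm_tendsto_zero]
    have := hreg.sqrt
    simpa [Real.sqrt_sq dist_nonneg, Subtype.dist_eq, dist_eq_norm, hX] using this
  -- every ultrafilter limit is a fixed point
  have main : ∀ U : Ultrafilter ℕ, (U : Filter ℕ) ≤ atTop → ∃ u : C, T u = u ∧
      ∀ y : H, Tendsto (fun n => ⟪X n, y⟫) U (nhds ⟪(u : H), y⟫) := by
    intro U hU
    obtain ⟨u, hu⟩ := aux_compact X _ hnorm U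
    have huC := aux_mem C hC hCc hCv X (fun n => (Y n).2) U u hu
    refine ⟨⟨u, huC⟩, ?_, hu⟩
    set v : C := T ⟨u, huC⟩ with hv
    have ineq : ∀ n, 2 * ⟪X n, u - (v : H)⟫ ≤ ‖u‖^2 - ‖(v : H)‖^2
        + ‖X n - X (n+1)‖ * (4 * (R + ‖(p : H)‖) + 4 * ‖(v : H)‖ + 2 * ‖u‖) := by
      intro n
      have h := hT (Y n) ⟨u, huC⟩
      rw [← hv, hs, Subtype.dist_eq, Subtype.dist_eq, Subtype.dist_eq, dist_eq_norm, dist_eq_norm,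
        dist_eq_norm] at h
      change 2 * ‖X (n+1) - (v : H)‖^2 ≤ ‖X (n+1) - u‖^2 + ‖(v : H) - X n‖^2 at h
      obtain ⟨d, hd⟩ : ∃ d, d = X n - X (n+1) := ⟨_, rfl⟩
      have e : X (n+1) = X n - d := by rw [hd]; abel
      have b1 := hnorm n
      have b2 := hnorm (n+1)
      have i1 := (abs_le.1 (abs_real_inner_le_norm d (X n))).2
      have i1' := (abs_le.1 (abs_real_inner_le_norm d (X n))).1
      have i2 := (abs_le.1 (abs_real_inner_le_norm d (v : H))).1
      have i3 := (abs_le.1 (abs_real_inner_le_norm d u)).2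
      have i4 := (abs_le.1 (abs_real_inner_le_norm d u)).1
      have m1 := mul_le_mul_of_nonneg_left b1 (norm_nonneg d)
      have m2 := mul_nonneg (norm_nonneg d) (norm_nonneg (v : H))
      have m3 := mul_nonneg (norm_nonneg d) (norm_nonneg u)
      have m4 := sq_nonneg ‖d‖
      have c1 := real_inner_comm d (X n)
      have c2 := real_inner_comm (v : H) (X n)
      rw [← hd]
      rw [e] at h
      simp only [norm_sub_sq_real, inner_sub_left, inner_sub_right] at h ⊢
      have m5 := mul_nonneg (norm_nonneg d) (norm_nonneg (X n))
      nlinarith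
    have t1 := (hu (u - v)).const_mul 2
    have t2 : Tendsto (fun n => ‖u‖^2 - ‖(v : H)‖^2
        + ‖X n - X (n+1)‖ * (4 * (R + ‖(p : H)‖) + 4 * ‖(v : H)‖ + 2 * ‖u‖)) U
        (nhds (‖u‖^2 - ‖(v : H)‖^2
        + ‖(0 : H)‖ * (4 * (R + ‖(p : H)‖) + 4 * ‖(v : H)‖ + 2 * ‖u‖))) :=
      ((hreg'.mono_left hU).norm.mul_const _).const_add _
    have h := le_of_tendsto_of_tendsto' t1 t2 ineq
    have h3 : ‖u - (v : H)‖^2 ≤ 0 := by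
      rw [norm_sub_sq_real]
      rw [inner_sub_right, real_inner_self_eq_norm_sq, norm_zero] at h
      linarith
    have h4 : u - (v : H) = 0 :=
      norm_eq_zero.1 (pow_eq_zero_iff (two_ne_zero) |>.1 (le_antisymm h3 (sq_nonneg _)))
    exact Subtype.ext (sub_eq_zero.1 h4).symm
  -- convergence of inner products against differences of fixed points
  have hconv : ∀ q : C, T q = q → ∃ l : ℝ, Tendsto (fun n => ‖X n - q‖^2) atTop (nhds l) := by
    intro q hq
    have := tendsto_atTop_ciInf (anti q hq) ⟨0, by rintro _ ⟨n, rfl⟩; exact dist_nonneg⟩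
    refine ⟨_, (this.pow 2).congr fun n => ?_⟩
    rw [Subtype.dist_eq, dist_eq_norm]
  obtain ⟨u, hu, hlim⟩ := main (Ultrafilter.of atTop) (Ultrafilter.of_le _)
  refine ⟨u, hu, fun y => ?_⟩
  rw [tendsto_iff_ultrafilter]
  intro U hU
  obtain ⟨w, hw, hlim'⟩ := main U hU
  have : u = w := by
    obtain ⟨l, hl⟩ := hconv u hu
    obtain ⟨l', hl'⟩ := hconv w hw
    have t : Tendsto (fun n => ⟪X n, (u : H) - w⟫) atTop
        (nhds ((‖(u : H)‖^2 - ‖(w : H)‖^2 - (l - l')) / 2)) := by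
      refine (((hl.sub hl').const_sub _).div_const 2).congr fun n => ?_
      rw [norm_sub_sq_real, norm_sub_sq_real, inner_sub_right]
      ring
    have e1 := tendsto_nhds_unique (hlim _) (t.mono_left (Ultrafilter.of_le _))
    have e2 := tendsto_nhds_unique (hlim' _) (t.mono_left hU)
    have e3 : ⟪(u : H) - w, (u : H) - w⟫ = 0 := by
      rw [inner_sub_left, e1, e2, sub_self]
    exact Subtype.ext (sub_eq_zero.1 (inner_self_eq_zero.1 e3))
  rw [this]
  exact hlim' y
end

section
/- Let (X,d) be a metric space and T a metrically nonspreading mapping of X into itself. Then T(U) is bounded for every nonempty bounded subset U of X. -/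
/-- A metrically nonspreading mapping maps every nonempty bounded subset onto a
bounded subset. -/
theorem stmt_14 {X : Type*} [MetricSpace X] (T : X → X)
    (hT : ∀ x y : X, 2 * dist (T x) (T y) ^ 2 ≤ dist (T x) y ^ 2 + dist (T y) x ^ 2)
    (U : Set X) (hU : U.Nonempty) (hUb : Bornology.IsBounded U) :
    Bornology.IsBounded (T '' U) := by
  obtain ⟨u, hu⟩ := hU
  obtain ⟨D, hD⟩ := Metric.isBounded_iff.1 hUb
  refine (Metric.isBounded_iff_subset_closedBall (T u)).2 ⟨4 * dist (T u) u + D, ?_⟩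
  rintro _ ⟨x, hx, rfl⟩
  rw [Metric.mem_closedBall]
  have h0 := hT x u
  have hxu : dist u x ≤ D := hD hu hx
  have h1 : dist (T x) u ≤ dist (T x) (T u) + dist (T u) u := dist_triangle _ _ _
  have h2 : dist (T u) x ≤ dist (T u) u + D := (dist_triangle _ u _).trans (by linarith)
  have hc : 0 ≤ dist (T u) u := dist_nonneg
  have hD0 : 0 ≤ D := dist_nonneg.trans hxu
  have h3 := pow_le_pow_left₀ dist_nonneg h1 2
  have h4 := pow_le_pow_left₀ dist_nonneg h2 2
  generalize dist (T x) (T u) = a at *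
  generalize dist (T u) u = c at *
  by_contra! h
  have h5 : (3 * c + D) ^ 2 < (a - c) ^ 2 :=
    pow_lt_pow_left₀ (by linarith) (by positivity) (by norm_num)
  nlinarith [mul_nonneg hc hD0, mul_nonneg hc hc]
end

section
/- Let C be a nonempty closed convex subset of a real Hilbert space H, T a metrically nonspreading mapping of C into itself (with the metric induced by the norm), {α_n} a sequence in (0,1] with ∑_{n=1}^∞ α_n = ∞, and {x_n} the sequence defined by x₁ ∈ C and x_{n+1} = (1 − α_n)·x_n + α_n·Tx_n for all n ∈ ℕ. Then T has a fixed point if and only if {x_n} is bounded. -/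
open Filter


lemma aux_weak {H : Type*} [NormedAddCommGroup H] [InnerProductSpace ℝ H]
    [CompleteSpace H] (w : ℕ → H) (M : ℝ) (hw : ∀ n, ‖w n‖ ≤ M) :
    ∃ (U : Ultrafilter ℕ) (z : H), (U : Filter ℕ) ≤ atTop ∧
      ∀ y, Tendsto (fun n => inner ℝ (w n) y) U (nhds (inner ℝ z y)) := by
  let f : ℕ → WeakDual ℝ H := fun n => StrongDual.toWeakDual (InnerProductSpace.toDual ℝ H (w n))
  have hcomp := WeakDual.isCompact_closedBall (𝕜 := ℝ) (E := H) 0 M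
  let U : Ultrafilter ℕ := Ultrafilter.of atTop
  have hU : (U : Filter ℕ) ≤ atTop := Ultrafilter.of_le atTop
  have hmem : ∀ n, f n ∈ WeakDual.toStrongDual ⁻¹' Metric.closedBall (0 : StrongDual ℝ H) M := by
    intro n
    simp only [Set.mem_preimage, mem_closedBall_zero_iff]
    change ‖InnerProductSpace.toDual ℝ H (w n)‖ ≤ M
    rw [LinearIsometryEquiv.norm_map]
    exact hw n
  obtain ⟨φ, -, hφ⟩ := isCompact_iff_ultrafilter_le_nhds.1 hcomp (U.map f) (by
    rw [le_principal_iff]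
    exact Filter.mem_map.2 (Filter.univ_mem' hmem))
  refine ⟨U, (InnerProductSpace.toDual ℝ H).symm (WeakDual.toStrongDual φ), hU, fun y => ?_⟩
  rw [InnerProductSpace.toDual_symm_apply]
  have h1 : Tendsto f U (nhds φ) := hφ
  exact ((WeakDual.eval_continuous y).tendsto φ).comp h1

lemma aux_step {H : Type*} [NormedAddCommGroup H] [InnerProductSpace ℝ H]
    (x t y s : H) (a : ℝ) (h0 : 0 < a) (h1 : a ≤ 1)
    (h : 2 * ‖t - s‖ ^ 2 ≤ ‖t - y‖ ^ 2 + ‖s - x‖ ^ 2) :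
    ‖(1 - a) • x + a • t - s‖ ^ 2 ≤
      ‖x - s‖ ^ 2 + a * (‖y‖ ^ 2 - ‖s‖ ^ 2) - 2 * (a * inner ℝ t (y - s)) := by
  have e : ‖(1 - a) • x + a • t - s‖ ^ 2 =
      (1 - a) * ‖x - s‖ ^ 2 + a * ‖t - s‖ ^ 2 - a * (1 - a) * ‖x - t‖ ^ 2 := by
    have : (1 - a) • x + a • t - s = (x - s) + a • (t - x) := by module
    rw [this]
    simp only [← real_inner_self_eq_norm_sq, inner_add_left, inner_add_right, inner_sub_left,
      inner_sub_right, real_inner_smul_left, real_inner_smul_right, real_inner_comm x t,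
      real_inner_comm x s, real_inner_comm t s]
    ring
  have e2 : ‖y‖ ^ 2 - ‖s‖ ^ 2 - 2 * inner ℝ t (y - s) = ‖t - y‖ ^ 2 - ‖t - s‖ ^ 2 := by
    rw [norm_sub_sq_real, norm_sub_sq_real, inner_sub_right]
    ring
  have e3 : 0 ≤ a * (1 - a) * ‖x - t‖ ^ 2 :=
    mul_nonneg (mul_nonneg h0.le (by linarith)) (sq_nonneg _)
  rw [norm_sub_rev s x] at h
  have e4 := mul_le_mul_of_nonneg_left h h0.le
  have e5 := congrArg (fun r => a * r) e2
  rw [e]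
  linarith

/-- Mann iteration for a metrically nonspreading self-mapping `T` of a nonempty closed
convex subset of a real Hilbert space: if `αₙ ∈ (0,1]` and `∑ αₙ = ∞`, then `T` has a
fixed point if and only if the Mann sequence `{xₙ}` is bounded. -/
theorem stmt_15 {H : Type*} [NormedAddCommGroup H] [InnerProductSpace ℝ H]
    [CompleteSpace H] (C : Set H) (hC : C.Nonempty) (hCc : IsClosed C) (hCv : Convex ℝ C)
    (T : C → C)
    (hT : ∀ x y : C, 2 * dist (T x) (T y) ^ 2 ≤ dist (T x) y ^ 2 + dist (T y) x ^ 2)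
    (α : ℕ → ℝ) (hα : ∀ n, α n ∈ Set.Ioc (0 : ℝ) 1)
    (hαsum : Tendsto (fun n : ℕ => ∑ k ∈ Finset.range n, α k) atTop atTop)
    (x : ℕ → C)
    (hx : ∀ n : ℕ, (x (n + 1) : H) = (1 - α n) • (x n : H) + α n • (T (x n) : H)) :
    (∃ u : C, T u = u) ↔ Bornology.IsBounded (Set.range fun n : ℕ => (x n : H)) := by
  have hT' : ∀ x y : C, 2 * ‖(T x : H) - T y‖ ^ 2 ≤ ‖(T x : H) - y‖ ^ 2 + ‖(T y : H) - x‖ ^ 2 := by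
    intro x y
    have := hT x y
    simpa only [Subtype.dist_eq, dist_eq_norm] using this
  constructor
  · rintro ⟨u, hu⟩
    have hq : ∀ v : C, ‖(T v : H) - u‖ ≤ ‖(v : H) - u‖ := by
      intro v
      have h := hT' v u
      rw [hu, norm_sub_rev (u : H) v] at h
      exact le_of_sq_le_sq (by linarith) (norm_nonneg _)
    have hb : ∀ n, ‖(x n : H) - u‖ ≤ ‖(x 0 : H) - u‖ := by
      intro n
      induction n with
      | zero => exact le_rfl
      | succ n ih =>
        have h0 := (hα n).1
        have h1 := (hα n).2
        have e : (x (n + 1) : H) - u = (1 - α n) • ((x n : H) - u) + α n • ((T (x n) : H) - u) := by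
          rw [hx]; module
        rw [e]
        refine (norm_add_le _ _).trans ?_
        rw [norm_smul, norm_smul, Real.norm_of_nonneg h0.le, Real.norm_of_nonneg (by linarith)]
        have := mul_le_mul_of_nonneg_left (hq (x n)) h0.le
        linarith
    refine (Metric.isBounded_closedBall (x := (u : H)) (r := ‖(x 0 : H) - u‖)).subset ?_
    rintro _ ⟨n, rfl⟩
    simpa [dist_eq_norm] using hb n
  · intro hbd
    obtain ⟨R, hR⟩ := hbd.exists_norm_le
    have hR' : ∀ n, ‖(x n : H)‖ ≤ R := fun n => hR _ ⟨n, rfl⟩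
    obtain ⟨M, hM⟩ : ∃ M, ∀ n, ‖(T (x n) : H)‖ ≤ M := by
      set p := x 0
      refine ⟨3 * ‖(T p : H) - p‖ + (‖(T p : H)‖ + R) + ‖(T p : H)‖, fun n => ?_⟩
      have h := hT' (x n) p
      have h1 : ‖(T (x n) : H) - p‖ ≤ ‖(T (x n) : H) - T p‖ + ‖(T p : H) - p‖ :=
        norm_sub_le_norm_sub_add_norm_sub _ _ _
      have h2 : ‖(T p : H) - x n‖ ≤ ‖(T p : H)‖ + R :=
        (norm_sub_le _ _).trans (by linarith [hR' n])
      have h3 : ‖(T (x n) : H)‖ ≤ ‖(T (x n) : H) - T p‖ + ‖(T p : H)‖ := by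
        simpa using norm_add_le ((T (x n) : H) - T p) (T p)
      have h4 := pow_le_pow_left₀ (norm_nonneg _) h1 2
      have h5 := pow_le_pow_left₀ (norm_nonneg _) h2 2
      have hb0 : 0 ≤ ‖(T p : H)‖ + R := (norm_nonneg _).trans h2
      have hc0 := norm_nonneg ((T p : H) - p)
      generalize ‖(T p : H)‖ + R = b at *
      generalize ‖(T p : H) - p‖ = c at *
      have ha0 := norm_nonneg ((T (x n) : H) - T p)
      generalize ‖(T (x n) : H) - T p‖ = a at *
      have : a ≤ 3 * c + b := by
        by_contra hcon
        push Not at hcon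
        nlinarith [mul_nonneg hb0 hc0, mul_pos (sub_pos.2 hcon) (sub_pos.2 hcon)]
      linarith
    have hM0 : 0 ≤ M := (norm_nonneg _).trans (hM 0)
    set S : ℕ → ℝ := fun n => ∑ k ∈ Finset.range n, α k with hS
    set W : ℕ → H := fun n => ∑ k ∈ Finset.range n, α k • (T (x k) : H) with hW
    have hS0 : ∀ n, 0 ≤ S n := fun n => Finset.sum_nonneg fun k _ => (hα k).1.le
    have hWb : ∀ n, ‖W n‖ ≤ S n * M := by
      intro n
      simp only [hW, hS, Finset.sum_mul]
      refine norm_sum_le_of_le _ fun k _ => ?_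
      rw [norm_smul, Real.norm_of_nonneg (hα k).1.le]
      exact mul_le_mul_of_nonneg_left (hM k) (hα k).1.le
    have hwb : ∀ n, ‖(S n)⁻¹ • W n‖ ≤ M := by
      intro n
      rw [norm_smul, norm_inv, Real.norm_of_nonneg (hS0 n)]
      rcases (hS0 n).eq_or_lt with h | h
      · rw [← h]; simpa using hM0
      · rw [inv_mul_le_iff₀ h]; exact hWb n
    obtain ⟨U, z, hU, hz⟩ := aux_weak _ M hwb
    have key : ∀ (y : C) n, ‖(x n : H) - T y‖ ^ 2 ≤ ‖(x 0 : H) - T y‖ ^ 2 +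
        S n * (‖(y : H)‖ ^ 2 - ‖(T y : H)‖ ^ 2) - 2 * inner ℝ (W n) ((y : H) - T y) := by
      intro y n
      induction n with
      | zero => simp [hS, hW]
      | succ n ih =>
        have h := aux_step (x n : H) (T (x n)) y (T y) (α n) (hα n).1 (hα n).2 (hT' (x n) y)
        rw [← hx] at h
        have e1 : S (n + 1) = S n + α n := Finset.sum_range_succ _ _
        have e2 : W (n + 1) = W n + α n • (T (x n) : H) := Finset.sum_range_succ _ _
        rw [e1, e2, inner_add_left, real_inner_smul_left]
        linarith
    have lim : ∀ y : C, 2 * inner ℝ z ((y : H) - T y) ≤ ‖(y : H)‖ ^ 2 - ‖(T y : H)‖ ^ 2 := by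
      intro y
      have t1 := (hz ((y : H) - T y)).const_mul 2
      have t2 : Tendsto (fun n => (S n)⁻¹ * ‖(x 0 : H) - T y‖ ^ 2 +
          (‖(y : H)‖ ^ 2 - ‖(T y : H)‖ ^ 2)) U
          (nhds (0 * ‖(x 0 : H) - T y‖ ^ 2 + (‖(y : H)‖ ^ 2 - ‖(T y : H)‖ ^ 2))) :=
        (((tendsto_inv_atTop_zero.comp hαsum).mono_left hU).mul_const _).add_const _
      rw [zero_mul, zero_add] at t2
      refine le_of_tendsto_of_tendsto t1 t2 ?_
      have hpos : ∀ᶠ n in (U : Filter ℕ), 0 < S n := hU (hαsum.eventually_gt_atTop 0)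
      filter_upwards [hpos] with n hn
      have h := key y n
      have h' : 2 * inner ℝ (W n) ((y : H) - T y) ≤ ‖(x 0 : H) - T y‖ ^ 2 +
        S n * (‖(y : H)‖ ^ 2 - ‖(T y : H)‖ ^ 2) := by
        linarith [sq_nonneg ‖(x n : H) - T y‖]
      have h'' := mul_le_mul_of_nonneg_left h' (inv_nonneg.2 hn.le)
      rw [mul_add, inv_mul_cancel_left₀ hn.ne'] at h''
      rw [real_inner_smul_left]
      linarith
    obtain ⟨p, hpC, hp⟩ := exists_norm_eq_iInf_of_complete_convex hC hCc.isComplete hCv z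
    have hp' := (norm_eq_iInf_iff_real_inner_le_zero hCv hpC).1 hp
    refine ⟨⟨p, hpC⟩, ?_⟩
    have h1 := lim ⟨p, hpC⟩
    have h2 := hp' _ (T ⟨p, hpC⟩).2
    apply Subtype.ext
    generalize (T ⟨p, hpC⟩ : H) = q at *
    simp only at h1 ⊢
    have h3 : ‖q - p‖ ^ 2 ≤ 0 := by
      rw [norm_sub_sq_real]
      simp only [inner_sub_left, inner_sub_right, real_inner_self_eq_norm_sq] at h1 h2
      rw [real_inner_comm]
      linarith
    have h4 : ‖q - p‖ = 0 := by nlinarith [norm_nonneg (q - p)]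
    exact sub_eq_zero.1 (norm_eq_zero.1 h4)
end

section
/- Let C be a nonempty closed convex subset of a real Hilbert space H, T a metrically nonspreading mapping of C into itself (with the metric induced by the norm) whose fixed point set is nonempty, {α_n} a sequence in (0,1] with inf_n α_n(1 − α_n) > 0, and {x_n} the sequence defined by x₁ ∈ C and x_{n+1} = (1 − α_n)·x_n + α_n·Tx_n for all n ∈ ℕ. Then {x_n} converges weakly to a fixed point of T, i.e., there exists u ∈ C with Tu = u such that ⟪x_n, y⟫ → ⟪u, y⟫ as n → ∞ for every y ∈ H. -/
open Filter
open scoped RealInnerProductSpace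

/-- A bounded sequence in a Hilbert space converges weakly along any ultrafilter. -/
theorem aux_weak_limit {H : Type*} [NormedAddCommGroup H] [InnerProductSpace ℝ H]
    [CompleteSpace H] (x : ℕ → H) (M : ℝ) (hM : ∀ n, ‖x n‖ ≤ M) (U : Ultrafilter ℕ) :
    ∃ u : H, ∀ y : H, Tendsto (fun n : ℕ => ⟪x n, y⟫) U (nhds ⟪u, y⟫) := by
  have hb : ∀ y n, |⟪x n, y⟫| ≤ M * ‖y‖ := fun y n =>
    (abs_real_inner_le_norm _ _).trans (mul_le_mul_of_nonneg_right (hM n) (norm_nonneg _))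
  have h1 : ∀ y : H, ∃ l : ℝ, |l| ≤ M * ‖y‖ ∧ Tendsto (fun n : ℕ => ⟪x n, y⟫) U (nhds l) := by
    intro y
    obtain ⟨l, hl, hl2⟩ := (isCompact_Icc (a := -(M * ‖y‖)) (b := M * ‖y‖)).ultrafilter_le_nhds
      (U.map (fun n : ℕ => ⟪x n, y⟫)) (by
        rw [le_principal_iff]
        exact Filter.mem_map.mpr (Filter.univ_mem' (fun n => abs_le.mp (hb y n))))
    exact ⟨l, abs_le.mpr hl, hl2⟩
  choose f hf hft using h1
  let g : H →ₗ[ℝ] ℝ :=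
    { toFun := f
      map_add' := fun a b => by
        refine tendsto_nhds_unique (hft (a + b)) ?_
        simp only [inner_add_right]
        exact (hft a).add (hft b)
      map_smul' := fun c a => by
        refine tendsto_nhds_unique (hft (c • a)) ?_
        simp only [real_inner_smul_right]
        exact (hft a).const_mul c }
  let g' : H →L[ℝ] ℝ := g.mkContinuous M hf
  refine ⟨(InnerProductSpace.toDual ℝ H).symm g', fun y => ?_⟩
  rw [InnerProductSpace.toDual_symm_apply]
  exact hft y

theorem aux_sq {H : Type*} [NormedAddCommGroup H] [InnerProductSpace ℝ H]
    (a b p : H) (t : ℝ) :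
    ‖(1 - t) • a + t • b - p‖ ^ 2 =
      (1 - t) * ‖a - p‖ ^ 2 + t * ‖b - p‖ ^ 2 - t * (1 - t) * ‖b - a‖ ^ 2 := by
  have e1 : (1 - t) • a + t • b - p = (a - p) + t • (b - a) := by module
  have e2 : b - p = (a - p) + (b - a) := by abel
  rw [e1, e2, norm_add_sq_real, norm_add_sq_real, norm_smul, real_inner_smul_right, mul_pow,
    Real.norm_eq_abs, sq_abs]
  ring

theorem aux_demi {H : Type*} [NormedAddCommGroup H] [InnerProductSpace ℝ H]
    (x tx u tu : H) (h : 2 * ‖tx - tu‖ ^ 2 ≤ ‖tx - u‖ ^ 2 + ‖tu - x‖ ^ 2) :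
    ‖u - tu‖ ^ 2 ≤ 2 * (‖tx - x‖ * ‖x - u‖) + 4 * (‖tx - x‖ * ‖u - tu‖)
      - 2 * (⟪x, u - tu⟫ - ⟪u, u - tu⟫) := by
  have e1 : tx - tu = (tx - x) + ((x - u) + (u - tu)) := by abel
  have e2 : tx - u = (tx - x) + (x - u) := by abel
  have e3 : ‖tu - x‖ = ‖(x - u) + (u - tu)‖ := by rw [norm_sub_rev]; congr 1; abel
  have e4 : ⟪x - u, u - tu⟫ = ⟪x, u - tu⟫ - ⟪u, u - tu⟫ := inner_sub_left _ _ _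
  rw [e1, e2, e3] at h
  simp only [norm_add_sq_real, inner_add_right] at h
  have h1 := abs_le.mp (abs_real_inner_le_norm (tx - x) (x - u))
  have h2 := abs_le.mp (abs_real_inner_le_norm (tx - x) (u - tu))
  nlinarith [sq_nonneg ‖tx - x‖, h1.1, h2.1]

theorem stmt_16 {H : Type*} [NormedAddCommGroup H] [InnerProductSpace ℝ H]
    [CompleteSpace H] (C : Set H) (hC : C.Nonempty) (hCc : IsClosed C) (hCv : Convex ℝ C)
    (T : C → C)
    (hT : ∀ x y : C, 2 * dist (T x) (T y) ^ 2 ≤ dist (T x) y ^ 2 + dist (T y) x ^ 2)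
    (hfix : ∃ u : C, T u = u)
    (α : ℕ → ℝ) (hα : ∀ n, α n ∈ Set.Ioc (0 : ℝ) 1)
    (hinf : 0 < ⨅ n : ℕ, α n * (1 - α n))
    (x : ℕ → C)
    (hx : ∀ n : ℕ, (x (n + 1) : H) = (1 - α n) • (x n : H) + α n • (T (x n) : H)) :
    ∃ u : C, T u = u ∧
      ∀ y : H, Tendsto (fun n : ℕ => ⟪(x n : H), y⟫) atTop (nhds ⟪(u : H), y⟫) := by
  simp only [Subtype.dist_eq, dist_eq_norm] at hT
  set c := ⨅ n : ℕ, α n * (1 - α n) with hc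
  have hcn : ∀ n, c ≤ α n * (1 - α n) := fun n => ciInf_le ⟨0, by
    rintro _ ⟨m, rfl⟩
    exact mul_nonneg (hα m).1.le (by linarith [(hα m).2])⟩ n
  have hstep : ∀ p : C, T p = p → ∀ n, ‖(x (n + 1) : H) - p‖ ^ 2 ≤
      ‖(x n : H) - p‖ ^ 2 - c * ‖(T (x n) : H) - x n‖ ^ 2 := by
    intro p hp n
    have h1 := hT (x n) p
    rw [hp, norm_sub_rev (p : H) (x n)] at h1
    rw [hx n, aux_sq]
    have h2 := mul_le_mul_of_nonneg_right (hcn n) (sq_nonneg ‖(T (x n) : H) - x n‖)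
    have h3 : ‖(T (x n) : H) - p‖ ^ 2 ≤ ‖(x n : H) - p‖ ^ 2 := by linarith
    have h4 := mul_le_mul_of_nonneg_left h3 (hα n).1.le
    linarith
  have hanti : ∀ p : C, T p = p → Antitone (fun n => ‖(x n : H) - p‖ ^ 2) := by
    intro p hp
    refine antitone_nat_of_succ_le fun n => ?_
    have := hstep p hp n
    have : 0 ≤ c * ‖(T (x n) : H) - x n‖ ^ 2 := by positivity
    linarith
  have hconv : ∀ p : C, T p = p → ∃ l, Tendsto (fun n => ‖(x n : H) - p‖ ^ 2) atTop (nhds l) := by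
    intro p hp
    exact ⟨_, tendsto_atTop_ciInf (hanti p hp) ⟨0, by rintro _ ⟨m, rfl⟩; positivity⟩⟩
  obtain ⟨p, hp⟩ := hfix
  have hbd : ∀ n, ‖(x n : H) - p‖ ≤ ‖(x 0 : H) - p‖ := fun n =>
    (sq_le_sq₀ (norm_nonneg _) (norm_nonneg _)).mp (hanti p hp (Nat.zero_le n))
  have hbdM : ∀ n, ‖(x n : H)‖ ≤ ‖(x 0 : H) - p‖ + ‖(p : H)‖ := fun n => by
    have := norm_le_norm_sub_add (x n : H) p
    linarith [hbd n]
  have hreg : Tendsto (fun n => ‖(T (x n) : H) - x n‖) atTop (nhds 0) := by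
    obtain ⟨l, hl⟩ := hconv p hp
    have hl' := (tendsto_add_atTop_iff_nat 1).mpr hl
    have h0 : Tendsto (fun n => c⁻¹ * (‖(x n : H) - p‖ ^ 2 - ‖(x (n + 1) : H) - p‖ ^ 2))
        atTop (nhds 0) := by
      simpa using (hl.sub hl').const_mul c⁻¹
    have h1 : Tendsto (fun n => ‖(T (x n) : H) - x n‖ ^ 2) atTop (nhds 0) := by
      refine squeeze_zero (fun n => sq_nonneg _) (fun n => ?_) h0
      rw [le_inv_mul_iff₀ hinf]
      linarith [hstep p hp n]
    have h2 := h1.sqrt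
    simpa [Real.sqrt_sq] using h2
  -- weak limits along ultrafilters are fixed points
  have key : ∀ U : Ultrafilter ℕ, (U : Filter ℕ) ≤ atTop → ∃ u : C, T u = u ∧
      ∀ y : H, Tendsto (fun n : ℕ => ⟪(x n : H), y⟫) U (nhds ⟪(u : H), y⟫) := by
    intro U hU
    obtain ⟨u, hu⟩ := aux_weak_limit (fun n => (x n : H)) _ hbdM U
    have huC : u ∈ C := by
      obtain ⟨q, hq, hq2⟩ := exists_norm_eq_iInf_of_complete_convex hC hCc.isComplete hCv u
      have hq3 := (norm_eq_iInf_iff_real_inner_le_zero hCv hq).mp hq2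
      have h1 : ⟪u, u - q⟫ ≤ ⟪q, u - q⟫ := by
        refine le_of_tendsto (hu (u - q)) (Eventually.of_forall fun n => ?_)
        have := hq3 (x n) (x n).2
        rw [real_inner_comm, inner_sub_left] at this
        linarith
      have h2 : ⟪u - q, u - q⟫ ≤ 0 := by rw [inner_sub_left]; linarith
      have h3 : u - q = 0 := inner_self_eq_zero.mp (le_antisymm h2 real_inner_self_nonneg)
      rw [sub_eq_zero.mp h3]; exact hq
    refine ⟨⟨u, huC⟩, ?_, hu⟩
    set tu : H := (T ⟨u, huC⟩ : H) with htu
    have hR := hreg.mono_left hU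
    have hineq : ∀ n, ‖u - tu‖ ^ 2 ≤
        2 * (‖(T (x n) : H) - x n‖ * (‖(x 0 : H) - p‖ + ‖(p : H) - u‖))
        + 4 * (‖(T (x n) : H) - x n‖ * ‖u - tu‖) - 2 * (⟪(x n : H), u - tu⟫ - ⟪u, u - tu⟫) := by
      intro n
      have h1 := aux_demi (x n : H) (T (x n)) u tu (hT (x n) ⟨u, huC⟩)
      have h2 : ‖(x n : H) - u‖ ≤ ‖(x 0 : H) - p‖ + ‖(p : H) - u‖ :=
        (norm_sub_le_norm_sub_add_norm_sub _ (p : H) _).trans (by linarith [hbd n])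
      have h3 := mul_le_mul_of_nonneg_left h2 (norm_nonneg ((T (x n) : H) - x n))
      linarith
    have hlim := (((hR.mul_const (‖(x 0 : H) - p‖ + ‖(p : H) - u‖)).const_mul 2).add
      ((hR.mul_const ‖u - tu‖).const_mul 4)).sub
      (((hu (u - tu)).sub_const ⟪u, u - tu⟫).const_mul 2)
    have h0 := ge_of_tendsto hlim (Eventually.of_forall hineq)
    simp only [zero_mul, mul_zero, add_zero, sub_self] at h0
    have h1 : ‖u - tu‖ = 0 := by
      have := le_antisymm h0 (sq_nonneg _)
      exact pow_eq_zero_iff (two_ne_zero) |>.mp this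
    exact Subtype.ext (sub_eq_zero.mp (norm_eq_zero.mp h1)).symm
  obtain ⟨u, hu, hul⟩ := key (Ultrafilter.of atTop) (Ultrafilter.of_le _)
  refine ⟨u, hu, fun y => ?_⟩
  rw [tendsto_iff_ultrafilter]
  intro V hV
  obtain ⟨v, hv, hvl⟩ := key V hV
  have huv : (u : H) = v := by
    obtain ⟨l, hl⟩ := hconv u hu
    obtain ⟨m, hm⟩ := hconv v hv
    have h1 : Tendsto (fun n => ⟪(x n : H), (u : H) - v⟫) atTop
        (nhds ((m - l + (‖(u : H)‖ ^ 2 - ‖(v : H)‖ ^ 2)) / 2)) := by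
      refine (((hm.sub hl).add_const (‖(u : H)‖ ^ 2 - ‖(v : H)‖ ^ 2)).div_const 2).congr ?_
      intro n
      rw [norm_sub_sq_real, norm_sub_sq_real, inner_sub_right]
      ring
    have h2 := tendsto_nhds_unique (hul _) (h1.mono_left (Ultrafilter.of_le _))
    have h3 := tendsto_nhds_unique (hvl _) (h1.mono_left hV)
    have h4 : ⟪(u : H) - v, (u : H) - v⟫ = 0 := by rw [inner_sub_left, h2, h3, sub_self]
    exact sub_eq_zero.mp (inner_self_eq_zero.mp h4)
  rw [huv]
  exact hvl y
end

section
/- Let H be a real Hilbert space, A : H → 2^H a monotone operator, and T : H → H a mapping satisfying x − Tx ∈ A(Tx) for every x ∈ H (so T is a resolvent of A). Then: (i) the set A⁻¹(0) = {u ∈ H : 0 ∈ A(u)} is nonempty if and only if the orbit {Tⁿx : n ∈ ℕ} is bounded for some x ∈ H; (ii) if A⁻¹(0) is nonempty, then for every x ∈ H the sequence {Tⁿx} converges weakly to an element u of A⁻¹(0), i.e., ⟪Tⁿx, y⟫ → ⟪u, y⟫ as n → ∞ for every y ∈ H. -/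
open Filter
open scoped RealInnerProductSpace

lemma weak_ultra {H : Type*} [NormedAddCommGroup H] [InnerProductSpace ℝ H]
    [CompleteSpace H] {ι : Type*} (s : ι → H) (R : ℝ) (hs : ∀ i, ‖s i‖ ≤ R) (U : Ultrafilter ι) :
    ∃ p : H, ∀ y : H, Tendsto (fun i => ⟪s i, y⟫) U (nhds ⟪p, y⟫) := by
  have hc := WeakDual.isCompact_closedBall (𝕜 := ℝ) (E := H) 0 R
  let g : ι → WeakDual ℝ H := fun i => StrongDual.toWeakDual (InnerProductSpace.toDual ℝ H (s i))
  have hg : ((U.map g : Ultrafilter _) : Filter (WeakDual ℝ H)) ≤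
      Filter.principal (WeakDual.toStrongDual ⁻¹' Metric.closedBall (0 : StrongDual ℝ H) R) := by
    rw [le_principal_iff, Ultrafilter.coe_map, mem_map]
    refine Filter.univ_mem' fun i => ?_
    change (InnerProductSpace.toDual ℝ H (s i)) ∈ Metric.closedBall (0 : StrongDual ℝ H) R
    simpa using hs i
  obtain ⟨f, -, hf⟩ := hc.ultrafilter_le_nhds _ hg
  refine ⟨(InnerProductSpace.toDual ℝ H).symm (WeakDual.toStrongDual f), fun y => ?_⟩
  rw [InnerProductSpace.toDual_symm_apply]
  have h2 : Tendsto g U (nhds f) := hf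
  exact ((WeakDual.eval_continuous y).tendsto f).comp h2

/-- Firmly nonexpansive with bounded orbit: fixed point. -/
lemma exists_fixed {H : Type*} [NormedAddCommGroup H] [InnerProductSpace ℝ H]
    [CompleteSpace H] (T : H → H)
    (hF : ∀ x y, 0 ≤ ⟪(x - T x) - (y - T y), T x - T y⟫) (x : H) (R : ℝ)
    (hR : ∀ n : ℕ, ‖T^[n] x‖ ≤ R) : ∃ p, T p = p := by
  let a : ℕ → H := fun N => ((N : ℝ) + 1)⁻¹ • ∑ n ∈ Finset.range (N + 1), T^[n + 1] x
  have ha : ∀ N, ‖a N‖ ≤ R := by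
    intro N
    have h1 : ‖∑ n ∈ Finset.range (N + 1), T^[n + 1] x‖ ≤ ((N : ℝ) + 1) * R := by
      refine (norm_sum_le_of_le _ (fun n _ => hR (n + 1))).trans ?_
      simp
    have h0 : (0 : ℝ) < (N : ℝ) + 1 := by positivity
    rw [norm_smul, Real.norm_of_nonneg (by positivity), inv_mul_le_iff₀ h0]
    exact h1
  obtain ⟨p, hp⟩ := weak_ultra a R ha (Ultrafilter.of atTop)
  refine ⟨p, ?_⟩
  have hstep : ∀ n : ℕ, ⟪T^[n + 1] x - T p, p - T p⟫ ≤
      (‖T^[n] x - T p‖ ^ 2 - ‖T^[n + 1] x - T p‖ ^ 2) / 2 := by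
    intro n
    have h := hF (T^[n] x) p
    rw [← Function.iterate_succ_apply' T n x] at h
    have e : T^[n] x - T p = (T^[n] x - T^[n+1] x) + (T^[n+1] x - T p) := by abel
    rw [e, norm_add_sq_real, real_inner_comm]
    rw [inner_sub_left] at h
    nlinarith [sq_nonneg ‖T^[n] x - T^[n+1] x‖]
  have hsum : ∀ N : ℕ, ⟪a N, p - T p⟫ - ⟪T p, p - T p⟫ ≤
      ‖x - T p‖ ^ 2 / 2 * ((N : ℝ) + 1)⁻¹ := by
    intro N
    have h1 := Finset.sum_le_sum (s := Finset.range (N + 1)) (fun n _ => hstep n)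
    rw [← Finset.sum_div, Finset.sum_range_sub'] at h1
    simp only [inner_sub_left _ (T p), Finset.sum_sub_distrib] at h1
    rw [← sum_inner] at h1
    simp only [Finset.sum_const, Finset.card_range, nsmul_eq_mul, Function.iterate_zero, id] at h1
    push_cast at h1
    have h0 : (0 : ℝ) < (N : ℝ) + 1 := by positivity
    simp only [a, inner_smul_left]
    rw [← div_eq_mul_inv, le_div_iff₀ h0]
    simp only [conj_trivial]
    have h2 := sq_nonneg ‖T^[N+1] x - T p‖
    have : (((N : ℝ) + 1)⁻¹ * ⟪∑ n ∈ Finset.range (N + 1), T^[n + 1] x, p - T p⟫ -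
        ⟪T p, p - T p⟫) * ((N : ℝ) + 1) = ⟪∑ n ∈ Finset.range (N + 1), T^[n + 1] x, p - T p⟫ -
        ((N : ℝ) + 1) * ⟪T p, p - T p⟫ := by
      field_simp
    rw [this]
    linarith
  have hlim : Tendsto (fun N : ℕ => ‖x - T p‖ ^ 2 / 2 * ((N : ℝ) + 1)⁻¹)
      (Ultrafilter.of atTop : Ultrafilter ℕ) (nhds 0) := by
    have := (tendsto_one_div_add_atTop_nhds_zero_nat (𝕜 := ℝ)).const_mul (‖x - T p‖ ^ 2 / 2)
    simp only [one_div, mul_zero] at this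
    exact this.mono_left (Ultrafilter.of_le _)
  have h := le_of_tendsto_of_tendsto' ((hp (p - T p)).sub_const _) hlim hsum
  rw [← inner_sub_left, real_inner_self_eq_norm_sq] at h
  have : ‖p - T p‖ = 0 := by nlinarith [norm_nonneg (p - T p)]
  exact (sub_eq_zero.mp (norm_eq_zero.mp this)).symm

lemma fejer {H : Type*} [NormedAddCommGroup H] [InnerProductSpace ℝ H] (T : H → H)
    (hF : ∀ x y, 0 ≤ ⟪(x - T x) - (y - T y), T x - T y⟫) (u : H) (hu : T u = u) (x : H) (n : ℕ) :
    ‖T^[n+1] x - u‖ ^ 2 + ‖T^[n] x - T^[n+1] x‖ ^ 2 ≤ ‖T^[n] x - u‖ ^ 2 := by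
  have h := hF (T^[n] x) u
  rw [← Function.iterate_succ_apply' T n x, hu, sub_self, sub_zero] at h
  have e : T^[n] x - u = (T^[n] x - T^[n+1] x) + (T^[n+1] x - u) := by abel
  rw [e, norm_add_sq_real]
  linarith

lemma fejer_lim {H : Type*} [NormedAddCommGroup H] [InnerProductSpace ℝ H] (T : H → H)
    (hF : ∀ x y, 0 ≤ ⟪(x - T x) - (y - T y), T x - T y⟫) (u : H) (hu : T u = u) (x : H) :
    ∃ l, Tendsto (fun n : ℕ => ‖T^[n] x - u‖ ^ 2) atTop (nhds l) := by
  refine ⟨_, tendsto_atTop_ciInf (antitone_nat_of_succ_le fun n => ?_) ⟨0, ?_⟩⟩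
  · nlinarith [fejer T hF u hu x n, sq_nonneg ‖T^[n] x - T^[n+1] x‖]
  · rintro _ ⟨n, rfl⟩
    positivity

lemma orbit_bdd {H : Type*} [NormedAddCommGroup H] [InnerProductSpace ℝ H] (T : H → H)
    (hF : ∀ x y, 0 ≤ ⟪(x - T x) - (y - T y), T x - T y⟫) (u : H) (hu : T u = u) (x : H) (n : ℕ) :
    ‖T^[n] x‖ ≤ ‖x - u‖ + ‖u‖ := by
  have h : ‖T^[n] x - u‖ ≤ ‖x - u‖ := by
    induction n with
    | zero => simp
    | succ n ih =>
      refine le_trans ?_ ih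
      refine le_of_sq_le_sq ?_ (norm_nonneg _)
      nlinarith [fejer T hF u hu x n, sq_nonneg ‖T^[n] x - T^[n+1] x‖]
  calc ‖T^[n] x‖ = ‖(T^[n] x - u) + u‖ := by simp
    _ ≤ _ := (norm_add_le _ _).trans (by linarith)

lemma weak_limit_fixed {H : Type*} [NormedAddCommGroup H] [InnerProductSpace ℝ H] (T : H → H)
    (hF : ∀ x y, 0 ≤ ⟪(x - T x) - (y - T y), T x - T y⟫) (u : H) (hu : T u = u) (x p : H)
    (U : Ultrafilter ℕ) (hU : (U : Filter ℕ) ≤ atTop)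
    (hp : ∀ y : H, Tendsto (fun n : ℕ => ⟪T^[n] x, y⟫) U (nhds ⟪p, y⟫)) : T p = p := by
  obtain ⟨l, hl⟩ := fejer_lim T hF u hu x
  have hd2 : Tendsto (fun n : ℕ => ‖T^[n] x - T^[n+1] x‖ ^ 2) atTop (nhds 0) := by
    have h1 := hl.sub (hl.comp (tendsto_add_atTop_nat 1))
    rw [sub_self] at h1
    refine squeeze_zero (fun n => by positivity) (fun n => ?_) h1
    have := fejer T hF u hu x n
    simp only [Function.comp]
    linarith
  have hd : Tendsto (fun n : ℕ => ‖T^[n] x - T^[n+1] x‖) atTop (nhds 0) := by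
    have := hd2.sqrt
    simpa [Real.sqrt_sq] using this
  set K := ‖x - u‖ + ‖u‖ + ‖T p‖ + ‖p - T p‖ with hK
  -- bound
  have hb : ∀ n : ℕ, ⟪T^[n] x, p - T p⟫ - ⟪T p, p - T p⟫ ≤ ‖T^[n] x - T^[n+1] x‖ * K := by
    intro n
    have h := hF (T^[n] x) p
    rw [← Function.iterate_succ_apply' T n x, inner_sub_left] at h
    have h1 := real_inner_le_norm (T^[n] x - T^[n+1] x) (T^[n+1] x - T p)
    have h2 := real_inner_le_norm (T^[n] x - T^[n+1] x) (p - T p)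
    have h3 : ‖T^[n+1] x - T p‖ ≤ ‖x - u‖ + ‖u‖ + ‖T p‖ :=
      (norm_sub_le _ _).trans (by linarith [orbit_bdd T hF u hu x (n+1)])
    have h4 := mul_le_mul_of_nonneg_left h3 (norm_nonneg (T^[n] x - T^[n+1] x))
    rw [real_inner_comm] at h
    rw [real_inner_comm (T^[n+1] x - T p) (p - T p)] at h
    simp only [inner_sub_left] at h h1 h2 ⊢
    simp only [inner_sub_right, inner_sub_left, real_inner_comm] at *
    rw [hK, mul_add]
    linarith
  have hlim := ((hd.mono_left hU).mul_const K)
  rw [zero_mul] at hlim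
  have h := le_of_tendsto_of_tendsto' ((hp (p - T p)).sub_const _) hlim hb
  rw [← inner_sub_left, real_inner_self_eq_norm_sq] at h
  have : ‖p - T p‖ = 0 := by nlinarith [norm_nonneg (p - T p)]
  exact (sub_eq_zero.mp (norm_eq_zero.mp this)).symm


/-- For a resolvent `T` of a monotone operator `A` on a real Hilbert space:
(i) `A⁻¹(0)` is nonempty iff some orbit `{Tⁿx}` is bounded;
(ii) if `A⁻¹(0)` is nonempty, each orbit `{Tⁿx}` converges weakly to a zero of `A`. -/
theorem stmt_18 {H : Type*} [NormedAddCommGroup H] [InnerProductSpace ℝ H]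
    [CompleteSpace H] (A : H → Set H)
    (hA : ∀ x y u v : H, u ∈ A x → v ∈ A y → 0 ≤ ⟪u - v, x - y⟫)
    (T : H → H) (hT : ∀ x : H, x - T x ∈ A (T x)) :
    ((∃ u : H, (0 : H) ∈ A u) ↔
        ∃ x : H, Bornology.IsBounded (Set.range fun n : ℕ => T^[n] x)) ∧
      ((∃ u : H, (0 : H) ∈ A u) → ∀ x : H, ∃ u : H, (0 : H) ∈ A u ∧
        ∀ y : H, Tendsto (fun n : ℕ => ⟪T^[n] x, y⟫) atTop (nhds ⟪u, y⟫)) := by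
  have hF : ∀ x y, 0 ≤ ⟪(x - T x) - (y - T y), T x - T y⟫ :=
    fun x y => hA _ _ _ _ (hT x) (hT y)
  have hfix : ∀ u, (0 : H) ∈ A u ↔ T u = u := by
    intro u
    constructor
    · intro h
      have h1 := hA _ _ _ _ h (hT u)
      rw [zero_sub, inner_neg_left, real_inner_self_eq_norm_sq] at h1
      have : ‖u - T u‖ = 0 := by nlinarith [norm_nonneg (u - T u)]
      exact (sub_eq_zero.mp (norm_eq_zero.mp this)).symm
    · intro h
      have h1 := hT u
      rwa [h, sub_self] at h1
  simp only [hfix]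
  refine ⟨⟨?_, ?_⟩, ?_⟩
  · rintro ⟨u, hu⟩
    refine ⟨u, isBounded_iff_forall_norm_le.mpr ⟨‖u - u‖ + ‖u‖, ?_⟩⟩
    rintro _ ⟨n, rfl⟩
    exact orbit_bdd T hF u hu u n
  · rintro ⟨x, hx⟩
    obtain ⟨R, hR⟩ := isBounded_iff_forall_norm_le.mp hx
    exact exists_fixed T hF x R fun n => hR _ ⟨n, rfl⟩
  · rintro ⟨u, hu⟩ x
    have hw := weak_ultra (fun n : ℕ => T^[n] x) _ (orbit_bdd T hF u hu x)
    obtain ⟨p, hp⟩ := hw (Ultrafilter.of atTop)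
    have hpf := weak_limit_fixed T hF u hu x p _ (Ultrafilter.of_le _) hp
    refine ⟨p, hpf, fun y => ?_⟩
    rw [tendsto_iff_ultrafilter]
    intro V hV
    obtain ⟨q, hq⟩ := hw V
    have hqf := weak_limit_fixed T hF u hu x q _ hV hq
    suffices p = q by rw [this]; exact hq y
    obtain ⟨l, hl⟩ := fejer_lim T hF p hpf x
    obtain ⟨m, hm⟩ := fejer_lim T hF q hqf x
    have hL : Tendsto (fun n : ℕ => ⟪T^[n] x, q - p⟫) atTop
        (nhds ((l - m - (‖p‖ ^ 2 - ‖q‖ ^ 2)) / 2)) := by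
      refine (((hl.sub hm).sub_const (‖p‖ ^ 2 - ‖q‖ ^ 2)).div_const 2).congr fun n => ?_
      rw [norm_sub_sq_real, norm_sub_sq_real, inner_sub_right]
      ring
    have e1 := tendsto_nhds_unique (hp (q - p)) (hL.mono_left (Ultrafilter.of_le _))
    have e2 := tendsto_nhds_unique (hq (q - p)) (hL.mono_left hV)
    have e3 : ⟪q - p, q - p⟫ = 0 := by rw [inner_sub_left, e1, e2, sub_self]
    exact (sub_eq_zero.mp (inner_self_eq_zero.mp e3)).symm
end
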